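/- arXiv:2107.02616 — 2 statements merged into one kernel-verified Lean document; each statement's English description precedes it below -/
import Mathlib

section
/- Let ρ be a weak ψ-Gibbs measure with respect to a non-trivial C¹-IFS (with or without overlaps). Then for every q ∈ (0,1], the L^q-spectrum β_ρ(q) exists as a limit, i.e. the sequence (1/(n log 2)) log Σ_{C∈D_n} ρ(C)^q converges as n → ∞. -/
open MeasureTheory Set Filter Topology
open scoped ENNReal NNReal Classical

noncomputable section

namespace Symb

/-- Finite words over the alphabet `{1,…,N}`. -/
abbrev Word (N : ℕ) := List (Fin N)

/-- The sequence space `I^ℕ`. -/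
abbrev SeqSp (N : ℕ) := ℕ → Fin N

variable {N : ℕ}

/-- The shift map on `I^ℕ`. -/
def shift (x : SeqSp N) : SeqSp N := fun k => x (k + 1)

/-- The cylinder set `[w]` of a finite word `w`. -/
def cylinder (w : Word N) : Set (SeqSp N) := {x | ∀ i : Fin w.length, x i = w.get i}

/-- Concatenation `w x` of a finite word with an infinite sequence. -/
def cat (w : Word N) (x : SeqSp N) : SeqSp N := fun k =>
  if h : k < w.length then w.get ⟨k, h⟩ else x (k - w.length)

/-- Birkhoff sum `S_m f(x) = Σ_{k<m} f(σ^k x)`. -/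
def birkhoff (f : SeqSp N → ℝ) (m : ℕ) (x : SeqSp N) : ℝ :=
  ∑ k ∈ Finset.range m, f (shift^[k] x)

/-- `S_w f = sup_{x ∈ [w]} S_{|w|} f(x)`. -/
def supBirkhoff (f : SeqSp N → ℝ) (w : Word N) : ℝ :=
  sSup (birkhoff f w.length '' cylinder w)

/-- `s_w f = inf_{x ∈ [w]} S_{|w|} f(x)`. -/
def infBirkhoff (f : SeqSp N → ℝ) (w : Word N) : ℝ :=
  sInf (birkhoff f w.length '' cylinder w)

/-- `Σ_{w ∈ Iᵐ} exp (S_w f)`. -/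
def partSum (f : SeqSp N → ℝ) (m : ℕ) : ℝ :=
  ∑ v : Fin m → Fin N, Real.exp (supBirkhoff f (List.ofFn v))

/-- The topological pressure `P(f) = lim_m (1/m) log Σ_{w ∈ Iᵐ} exp(S_w f)`
(defined via `limsup`; for continuous `f` the limit exists). -/
def pressure (f : SeqSp N → ℝ) : ℝ :=
  Filter.limsup (fun m => Real.log (partSum f m) / m) Filter.atTop

/-- `var_k(f)`, the `k`-th variation of `f`. -/
def varn (f : SeqSp N → ℝ) (k : ℕ) : ℝ :=
  sSup {d | ∃ x y : SeqSp N, (∀ i < k, x i = y i) ∧ d = |f x - f y|}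

/-- The Perron–Frobenius (transfer) operator `L_ψ f(x) = Σ_{σ y = x} e^{ψ(y)} f(y)`. -/
def transfer (ψ f : SeqSp N → ℝ) (x : SeqSp N) : ℝ :=
  ∑ j : Fin N, Real.exp (ψ (cat [j] x)) * f (cat [j] x)

/-- `L_ψ 1 = 1`. -/
def Normalized (ψ : SeqSp N → ℝ) : Prop :=
  ∀ x, ∑ j : Fin N, Real.exp (ψ (cat [j] x)) = 1

/-- `ν` is a fixed point of the dual transfer operator: `∫ L_ψ f dν = ∫ f dν`
for all continuous `f`. -/
def IsTransferFixed (ψ : SeqSp N → ℝ) (ν : MeasureTheory.Measure (SeqSp N)) : Prop :=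
  ∀ f : SeqSp N → ℝ, Continuous f → ∫ x, transfer ψ f x ∂ν = ∫ x, f x ∂ν

/-- `ψ` is Hölder continuous on `I^ℕ`: `var_k(ψ) ≤ C αᵏ` for some `α ∈ (0,1)`. -/
def HolderPotential (ψ : SeqSp N → ℝ) : Prop :=
  ∃ α ∈ Set.Ioo (0:ℝ) 1, ∃ C : ℝ, ∀ k : ℕ, varn ψ k ≤ C * α ^ k

end Symb

namespace Symb

/-- A `C¹` iterated function system on `[0,1]`. -/
structure C1IFS (N : ℕ) where
  T : Fin N → ℝ → ℝ
  T' : Fin N → ℝ → ℝ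
  maps_into : ∀ i, Set.MapsTo (T i) (Set.Icc 0 1) (Set.Icc 0 1)
  hderiv : ∀ i, ∀ x ∈ Set.Icc (0:ℝ) 1, HasDerivWithinAt (T i) (T' i x) (Set.Icc 0 1) x
  cont_deriv : ∀ i, ContinuousOn (T' i) (Set.Icc 0 1)
  contracting : ∀ i, ∃ r < (1:ℝ), ∀ x ∈ Set.Icc (0:ℝ) 1, |T' i x| ≤ r
  deriv_bdd_below : ∀ i, ∃ c > (0:ℝ), ∀ x ∈ Set.Icc (0:ℝ) 1, c ≤ |T' i x|

variable {N : ℕ}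

/-- The IFS is non-trivial: at least two maps and no common fixed point. -/
def C1IFS.NontrivialIFS (Φ : C1IFS N) : Prop :=
  2 ≤ N ∧ ¬ ∃ x ∈ Set.Icc (0:ℝ) 1, ∀ i, Φ.T i x = x

/-- The IFS is `C^{1+γ}`: every `T_i'` is `γ`-Hölder for some `γ ∈ (0,1)`. -/
def C1IFS.IsC1gamma (Φ : C1IFS N) : Prop :=
  ∃ γ ∈ Set.Ioo (0:ℝ) 1, ∃ C : ℝ, ∀ i, ∀ x ∈ Set.Icc (0:ℝ) 1, ∀ y ∈ Set.Icc (0:ℝ) 1,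
    |Φ.T' i x - Φ.T' i y| ≤ C * |x - y| ^ γ

/-- `T_w = T_{w₁} ∘ ⋯ ∘ T_{w_k}`. -/
def wordMap (Φ : C1IFS N) : Word N → ℝ → ℝ
  | [] => id
  | i :: w => Φ.T i ∘ wordMap Φ w

/-- `T_w'`, the derivative of `T_w` (by the chain rule). -/
def wordDeriv (Φ : C1IFS N) : Word N → ℝ → ℝ
  | [] => fun _ => 1
  | i :: w => fun x => Φ.T' i (wordMap Φ w x) * wordDeriv Φ w x

/-- `π` is the natural coding map of the IFS:  `π(x) ∈ T_{x|m}([0,1])` for all `m`. -/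
def IsCoding (Φ : C1IFS N) (π : SeqSp N → ℝ) : Prop :=
  ∀ x : SeqSp N, ∀ m : ℕ, π x ∈ wordMap Φ (List.ofFn fun i : Fin m => x i) '' Set.Icc 0 1

/-- The geometric potential `φ(ω) = log |T'_{ω₁}(π(σω))|`. -/
def geomPot (Φ : C1IFS N) (π : SeqSp N → ℝ) (x : SeqSp N) : ℝ :=
  Real.log |Φ.T' (x 0) (π (shift x))|

/-- The open set condition with feasible open set `(0,1)`. -/
def OSC (Φ : C1IFS N) : Prop :=
  ∀ i j, i ≠ j → Disjoint (Φ.T i '' Set.Ioo 0 1) (Φ.T j '' Set.Ioo 0 1)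

/-- Left endpoint of the interval `I_w = T_w([0,1])`. -/
def aW (Φ : C1IFS N) (w : Word N) : ℝ := sInf (wordMap Φ w '' Set.Icc 0 1)

/-- Right endpoint of the interval `I_w = T_w([0,1])`. -/
def bW (Φ : C1IFS N) (w : Word N) : ℝ := sSup (wordMap Φ w '' Set.Icc 0 1)

/-- `(b_m)` is a weak bounded distortion sequence for `Φ`: non-negative, `o(m)`, and
`e^{-b_{|w|}} ≤ T_w'(x)/T_w'(y) ≤ e^{b_{|w|}}` for all words `w` and `x,y ∈ [0,1]`. -/
def IsWBDPseq (Φ : C1IFS N) (b : ℕ → ℝ) : Prop :=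
  (∀ m, 0 ≤ b m) ∧ Filter.Tendsto (fun m => b m / m) Filter.atTop (nhds 0) ∧
  ∀ w : Word N, ∀ x ∈ Set.Icc (0:ℝ) 1, ∀ y ∈ Set.Icc (0:ℝ) 1,
    Real.exp (-(b w.length)) ≤ wordDeriv Φ w x / wordDeriv Φ w y ∧
    wordDeriv Φ w x / wordDeriv Φ w y ≤ Real.exp (b w.length)

end Symb
namespace Lq

open MeasureTheory

/-- The dyadic interval `((k-1)2^{-n}, k 2^{-n}]`. -/
def dyadic (n : ℕ) (k : ℤ) : Set ℝ := Set.Ioc (((k : ℝ) - 1) / 2 ^ n) ((k : ℝ) / 2 ^ n)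

/-- `Σ_{C ∈ D_n} ρ(C)^q`, the sum over dyadic intervals of positive measure. -/
def lqSum (ρ : Measure ℝ) (n : ℕ) (q : ℝ) : ℝ :=
  ∑' k : ℤ, if ρ (dyadic n k) = 0 then 0 else (ρ (dyadic n k)).toReal ^ q

/-- `β_n^ρ(q) = (1/(n log 2)) log Σ_{C ∈ D_n} ρ(C)^q`. -/
def betaN (ρ : Measure ℝ) (n : ℕ) (q : ℝ) : ℝ :=
  Real.log (lqSum ρ n q) / (n * Real.log 2)

/-- The `L^q`-spectrum `β_ρ(q) = limsup_n β_n^ρ(q)`. -/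
def beta (ρ : Measure ℝ) (q : ℝ) : ℝ :=
  Filter.limsup (fun n => betaN ρ n q) Filter.atTop

end Lq
open Symb

namespace LqAux

lemma mem_dyadic_iff (n : ℕ) (k : ℤ) (y : ℝ) :
    y ∈ Lq.dyadic n k ↔ ⌈(2:ℝ) ^ n * y⌉ = k := by
  have h2 : (0:ℝ) < 2 ^ n := by positivity
  rw [Int.ceil_eq_iff, Lq.dyadic, Set.mem_Ioc, div_lt_iff₀ h2, le_div_iff₀ h2, mul_comm y]

lemma ceil_close {a b : ℝ} {K : ℕ} (h : |a - b| ≤ K) : |⌈a⌉ - ⌈b⌉| ≤ (K : ℤ) := by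
  have h1 := Int.le_ceil a
  have h2 := Int.ceil_lt_add_one a
  have h3 := Int.le_ceil b
  have h4 := Int.ceil_lt_add_one b
  rw [abs_le] at h
  have h5 : ((⌈a⌉ - ⌈b⌉ : ℤ) : ℝ) < ((K + 1 : ℤ) : ℝ) := by push_cast; linarith
  have h6 : ((⌈b⌉ - ⌈a⌉ : ℤ) : ℝ) < ((K + 1 : ℤ) : ℝ) := by push_cast; linarith
  have h7 := Int.cast_lt.1 h5
  have h8 := Int.cast_lt.1 h6
  rw [abs_le]; constructor <;> linarith

lemma ceil_parent {n m : ℕ} {C : ℤ} {y z : ℝ} (hy : y ∈ Lq.dyadic (n + m) C)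
    (hz : z ∈ Lq.dyadic (n + m) C) : ⌈(2:ℝ) ^ n * y⌉ = ⌈(2:ℝ) ^ n * z⌉ := by
  rw [mem_dyadic_iff] at hy hz
  have key : ∀ t : ℝ, ⌈(2:ℝ) ^ n * t⌉ = ⌈((⌈(2:ℝ) ^ (n + m) * t⌉ : ℤ) : ℝ) / ((2 ^ m : ℕ) : ℝ)⌉ := by
    intro t
    have h2 : (0:ℝ) < 2 ^ m := by positivity
    refine eq_of_forall_ge_iff fun l => ?_
    rw [Int.ceil_le, Int.ceil_le]
    push_cast
    rw [div_le_iff₀ h2]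
    have : (l:ℝ) * 2 ^ m = ((l * 2 ^ m : ℤ) : ℝ) := by push_cast; rfl
    rw [this, Int.cast_le, Int.ceil_le, ← this, pow_add, mul_assoc, mul_comm ((2:ℝ) ^ m),
      ← mul_assoc]
    exact (mul_le_mul_iff_left₀ h2).symm
  rw [key y, key z, hy, hz]

lemma measurableSet_dyadic (n : ℕ) (k : ℤ) : MeasurableSet (Lq.dyadic n k) :=
  measurableSet_Ioc

/-- The sum over dyadic intervals, with values in `ℝ≥0∞`. -/
def esum (ρ : Measure ℝ) (q : ℝ) (n : ℕ) : ℝ≥0∞ := ∑' k : ℤ, ρ (Lq.dyadic n k) ^ q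

lemma sum_rpow_le {ι : Type*} (s : Finset ι) (f : ι → ℝ≥0∞) {q : ℝ} (hq0 : 0 < q) (hq1 : q ≤ 1) :
    (∑ i ∈ s, f i) ^ q ≤ ∑ i ∈ s, f i ^ q := by
  induction s using Finset.cons_induction with
  | empty => simp [hq0]
  | cons a s ha ih =>
    rw [Finset.sum_cons, Finset.sum_cons]
    exact (ENNReal.rpow_add_le_add_rpow _ _ hq0.le hq1).trans (by gcongr)

lemma tsum_rpow_le {ι : Type*} (f : ι → ℝ≥0∞) {q : ℝ} (hq0 : 0 < q) (hq1 : q ≤ 1) :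
    (∑' i, f i) ^ q ≤ ∑' i, f i ^ q := by
  have h1 : Tendsto (fun s : Finset ι => (∑ i ∈ s, f i) ^ q) atTop (𝓝 ((∑' i, f i) ^ q)) :=
    (ENNReal.continuous_rpow_const.tendsto _).comp ENNReal.summable.hasSum
  refine le_of_tendsto h1 (Eventually.of_forall fun s => ?_)
  exact (sum_rpow_le s f hq0 hq1).trans (ENNReal.sum_le_tsum s)

/-- A sum over integers where only terms within distance `K` of a centre survive. -/
lemma tsum_le_of_close (f : ℤ → ℝ≥0∞) (B : ℝ≥0∞) (K : ℕ) (k₀ : ℤ) (hB : ∀ k, f k ≤ B)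
    (h0 : ∀ k, f k ≠ 0 → |k - k₀| ≤ (K : ℤ)) : ∑' k, f k ≤ (2 * K + 1) * B := by
  have : ∑' k, f k = ∑ k ∈ Finset.Icc (k₀ - K) (k₀ + K), f k := by
    refine tsum_eq_sum fun k hk => ?_
    by_contra hne
    have := abs_le.1 (h0 k hne)
    exact hk (Finset.mem_Icc.2 ⟨by linarith, by linarith⟩)
  rw [this]
  refine (Finset.sum_le_card_nsmul _ _ B fun k _ => hB k).trans ?_
  rw [nsmul_eq_mul, Int.card_Icc]
  have : (k₀ + K + 1 - (k₀ - K)).toNat = 2 * K + 1 := by omega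
  rw [this]; push_cast; rfl

lemma tsum_le_of_exists_close (f : ℤ → ℝ≥0∞) (B : ℝ≥0∞) (K : ℕ) (hB : ∀ k, f k ≤ B)
    (h0 : ∀ k l, f k ≠ 0 → f l ≠ 0 → |k - l| ≤ (K : ℤ)) : ∑' k, f k ≤ (2 * K + 1) * B := by
  by_cases h : ∃ l, f l ≠ 0
  · obtain ⟨l, hl⟩ := h
    exact tsum_le_of_close f B K l hB fun k hk => h0 k l hk hl
  · push Not at h
    simp [h]

lemma measure_eq_tsum {Ω : Type*} [MeasurableSpace Ω] (μ : Measure Ω) (Y : Ω → ℝ)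
    (hY : Measurable Y) (n : ℕ) (A : Set Ω) (hA : MeasurableSet A) :
    μ A = ∑' k : ℤ, μ (A ∩ Y ⁻¹' Lq.dyadic n k) := by
  rw [← measure_iUnion]
  · congr 1
    ext x
    simp [mem_dyadic_iff]
  · intro i j hij
    refine Set.disjoint_left.2 fun x hx hy => hij ?_
    have h1 := (mem_dyadic_iff _ _ _).1 hx.2
    have h2 := (mem_dyadic_iff _ _ _).1 hy.2
    exact h1.symm.trans h2
  · intro k
    exact hA.inter (hY (measurableSet_dyadic n k))

section core

variable {Ω : Type*} [MeasurableSpace Ω] (ν : Measure Ω)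

/-- Change of scale for one branch. -/
lemma esum_branch (X Y : Ω → ℝ) (hX : Measurable X) (hY : Measurable Y) (n m K : ℕ)
    (hXY : ∀ x y, |X x - X y| ≤ K * 2 ^ n * |Y x - Y y|) {q : ℝ} (hq0 : 0 < q) (hq1 : q ≤ 1) :
    ∑' k : ℤ, ν (X ⁻¹' Lq.dyadic m k) ^ q ≤
      (2 * K + 1) * ∑' k : ℤ, ν (Y ⁻¹' Lq.dyadic (n + m) k) ^ q := by
  calc ∑' k : ℤ, ν (X ⁻¹' Lq.dyadic m k) ^ q
      ≤ ∑' k : ℤ, ∑' l : ℤ, ν (X ⁻¹' Lq.dyadic m k ∩ Y ⁻¹' Lq.dyadic (n + m) l) ^ q := by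
        refine ENNReal.tsum_le_tsum fun k => ?_
        rw [measure_eq_tsum ν Y hY (n + m) _ (hX (measurableSet_dyadic m k))]
        exact tsum_rpow_le _ hq0 hq1
    _ = ∑' l : ℤ, ∑' k : ℤ, ν (X ⁻¹' Lq.dyadic m k ∩ Y ⁻¹' Lq.dyadic (n + m) l) ^ q :=
        ENNReal.tsum_comm
    _ ≤ ∑' l : ℤ, (2 * K + 1) * ν (Y ⁻¹' Lq.dyadic (n + m) l) ^ q := by
        refine ENNReal.tsum_le_tsum fun l => ?_
        refine tsum_le_of_exists_close _ _ _ (fun k => ?_) (fun k k' hk hk' => ?_)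
        · gcongr; exact Set.inter_subset_right
        · have aux : ∀ k, ν (X ⁻¹' Lq.dyadic m k ∩ Y ⁻¹' Lq.dyadic (n + m) l) ^ q ≠ 0 →
              ∃ ω, X ω ∈ Lq.dyadic m k ∧ Y ω ∈ Lq.dyadic (n + m) l := by
            intro k hk
            by_contra hne
            push Not at hne
            apply hk
            have : X ⁻¹' Lq.dyadic m k ∩ Y ⁻¹' Lq.dyadic (n + m) l = ∅ := by
              ext ω; simpa using hne ω
            simp [this, hq0]
          obtain ⟨a, ha, ha'⟩ := aux k hk
          obtain ⟨b, hb, hb'⟩ := aux k' hk'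
          rw [mem_dyadic_iff] at ha hb
          rw [← ha, ← hb]
          apply ceil_close
          have hd : |Y a - Y b| ≤ 1 / 2 ^ (n + m) := by
            simp only [Lq.dyadic, Set.mem_Ioc, sub_div] at ha' hb'
            rw [abs_le]; constructor <;> linarith
          rw [← mul_sub, abs_mul, abs_of_pos (by positivity : (0:ℝ) < 2 ^ m)]
          calc (2:ℝ) ^ m * |X a - X b| ≤ 2 ^ m * (K * 2 ^ n * (1 / 2 ^ (n + m))) := by
                gcongr
                exact (hXY a b).trans (by gcongr)
            _ = K := by rw [pow_add]; field_simp
    _ = _ := ENNReal.tsum_mul_left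

lemma jensen {ι : Type*} [Fintype ι] (p a : ι → ℝ≥0∞) {q : ℝ} (hq0 : 0 < q) (hq1 : q ≤ 1) :
    ∑ i, p i * a i ^ q ≤ (∑ i, p i) ^ (1 - q) * (∑ i, p i * a i) ^ q := by
  have h := ENNReal.inner_le_weight_mul_Lp_of_nonneg Finset.univ (p := q⁻¹)
    ((one_le_inv₀ hq0).2 hq1) p (fun i => a i ^ q)
  simp only [inv_inv] at h
  refine h.trans_eq ?_
  congr 3
  ext i
  rw [← ENNReal.rpow_mul, mul_inv_cancel₀ hq0.ne', ENNReal.rpow_one]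

theorem core [IsProbabilityMeasure ν] {ι : Type*} [Fintype ι] (X : Ω → ℝ) (hX : Measurable X) (Y : ι → Ω → ℝ)
    (hY : ∀ i, Measurable (Y i)) (p : ι → ℝ≥0∞) (hp : ∀ i, p i ≠ ⊤) (c : ℝ≥0∞)
    (n m K : ℕ)
    (ha : ∀ A, MeasurableSet A → ∑ i, p i * ν (Y i ⁻¹' A) ≤ c * ν (X ⁻¹' A))
    (hb : ∀ A, MeasurableSet A → ν (X ⁻¹' A) ≤ c * ∑ i, p i * ν (Y i ⁻¹' A))
    (hXY : ∀ i x y, |X x - X y| ≤ K * 2 ^ n * |Y i x - Y i y|)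
    (hYY : ∀ i x y, 2 ^ n * |Y i x - Y i y| ≤ K)
    {q : ℝ} (hq0 : 0 < q) (hq1 : q ≤ 1) :
    esum (ν.map X) q n * esum (ν.map X) q m ≤
      (2 * K + 1) ^ 3 * (c ^ q) ^ 2 * esum (ν.map X) q (n + m) := by
  have hmap : ∀ n k, (ν.map X) (Lq.dyadic n k) = ν (X ⁻¹' Lq.dyadic n k) := fun n k =>
    Measure.map_apply hX (measurableSet_dyadic n k)
  simp only [esum, hmap]
  obtain ⟨ω₀⟩ : Nonempty Ω := ν.nonempty_of_neZero
  set κ : ι → ℤ := fun i => ⌈(2:ℝ) ^ n * Y i ω₀⌉ with hκ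
  set pk : ℤ → ι → ℝ≥0∞ := fun k i => if κ i = k then p i else 0 with hpk
  set P : ℤ → ℝ≥0∞ := fun k => ∑ i, pk k i with hP
  set M : ℝ≥0∞ := 2 * K + 1 with hM
  have hclose : ∀ i ω, |⌈(2:ℝ) ^ n * Y i ω⌉ - κ i| ≤ (K : ℤ) := by
    intro i ω
    apply ceil_close
    rw [← mul_sub, abs_mul, abs_of_pos (by positivity : (0:ℝ) < 2 ^ n)]
    exact hYY i ω ω₀
  have hPfin : ∀ k, P k ≠ ⊤ := by
    intro k
    refine ENNReal.sum_ne_top.2 fun i _ => ?_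
    simp only [hpk]; split_ifs
    · exact hp i
    · simp
  -- first step
  have step1 : ∑' k : ℤ, ν (X ⁻¹' Lq.dyadic n k) ^ q ≤ c ^ q * (M * ∑' k, P k ^ q) := by
    have h1 : ∀ k : ℤ, ν (X ⁻¹' Lq.dyadic n k) ≤
        c * ∑' l : ℤ, if |k - l| ≤ (K : ℤ) then P l else 0 := by
      intro k
      refine (hb _ (measurableSet_dyadic n k)).trans ?_
      gcongr
      have h2 : ∀ i, p i * ν (Y i ⁻¹' Lq.dyadic n k) ≤
          ∑' l : ℤ, if |k - l| ≤ (K : ℤ) then pk l i else 0 := by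
        intro i
        by_cases hne : ∃ ω, Y i ω ∈ Lq.dyadic n k
        · obtain ⟨ω, hω⟩ := hne
          rw [mem_dyadic_iff] at hω
          have h3 := hclose i ω
          rw [hω] at h3
          calc p i * ν (Y i ⁻¹' Lq.dyadic n k) ≤ p i * 1 := by gcongr; exact prob_le_one
            _ = if |k - κ i| ≤ (K : ℤ) then pk (κ i) i else 0 := by simp [h3, hpk]
            _ ≤ _ := ENNReal.le_tsum (f := fun l : ℤ => if |k - l| ≤ (K : ℤ) then pk l i else 0) (κ i)
        · push Not at hne
          have : Y i ⁻¹' Lq.dyadic n k = ∅ := by ext ω; simpa using hne ω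
          simp [this]
      refine (Finset.sum_le_sum fun i _ => h2 i).trans_eq ?_
      rw [← Summable.tsum_finsetSum (fun i _ => ENNReal.summable)]
      refine tsum_congr fun l => ?_
      split_ifs <;> simp [hP]
    calc ∑' k : ℤ, ν (X ⁻¹' Lq.dyadic n k) ^ q
        ≤ ∑' k : ℤ, c ^ q * ∑' l : ℤ, (if |k - l| ≤ (K : ℤ) then P l ^ q else 0) := by
          refine ENNReal.tsum_le_tsum fun k => ?_
          refine (ENNReal.rpow_le_rpow (h1 k) hq0.le).trans ?_
          rw [ENNReal.mul_rpow_of_nonneg _ _ hq0.le]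
          gcongr
          refine (tsum_rpow_le _ hq0 hq1).trans_eq ?_
          refine tsum_congr fun l => ?_
          split_ifs <;> simp [hq0]
      _ = c ^ q * ∑' l : ℤ, ∑' k : ℤ, (if |k - l| ≤ (K : ℤ) then P l ^ q else 0) := by
          rw [ENNReal.tsum_mul_left, ENNReal.tsum_comm]
      _ ≤ c ^ q * ∑' l : ℤ, M * P l ^ q := by
          gcongr with l
          refine tsum_le_of_close _ _ K l (fun k => ?_) (fun k hk => ?_)
          · split_ifs <;> simp
          · by_contra h; simp [h] at hk
      _ = _ := by rw [ENNReal.tsum_mul_left]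
  -- second step
  set G : ℤ → ℤ → ℝ≥0∞ := fun k C => ∑ i, pk k i * ν (Y i ⁻¹' Lq.dyadic (n + m) C) with hG
  have step2 : ∀ k, P k ^ q * (∑' l : ℤ, ν (X ⁻¹' Lq.dyadic m l) ^ q) ≤
      M * ∑' C, G k C ^ q := by
    intro k
    by_cases hPk : P k = 0
    · simp [hPk, hq0]
    have h1 : P k * (∑' l : ℤ, ν (X ⁻¹' Lq.dyadic m l) ^ q) ≤
        P k ^ (1 - q) * (M * ∑' C, G k C ^ q) := by
      calc P k * (∑' l : ℤ, ν (X ⁻¹' Lq.dyadic m l) ^ q)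
          = ∑ i, pk k i * (∑' l : ℤ, ν (X ⁻¹' Lq.dyadic m l) ^ q) := by
            rw [hP, Finset.sum_mul]
        _ ≤ ∑ i, pk k i * (M * ∑' C : ℤ, ν (Y i ⁻¹' Lq.dyadic (n + m) C) ^ q) := by
            gcongr with i
            exact esum_branch ν X (Y i) hX (hY i) n m K (hXY i) hq0 hq1
        _ = M * ∑' C : ℤ, ∑ i, pk k i * ν (Y i ⁻¹' Lq.dyadic (n + m) C) ^ q := by
            rw [Summable.tsum_finsetSum (fun i _ => ENNReal.summable), Finset.mul_sum]
            refine Finset.sum_congr rfl fun i _ => ?_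
            rw [ENNReal.tsum_mul_left]; ring
        _ ≤ M * ∑' C : ℤ, P k ^ (1 - q) * G k C ^ q := by
            gcongr with C
            exact jensen _ _ hq0 hq1
        _ = _ := by rw [ENNReal.tsum_mul_left]; ring
    have h2 : P k ^ (q - 1) * P k = P k ^ q := by
      conv_lhs => rw [← ENNReal.rpow_one (P k), ← ENNReal.rpow_mul, one_mul]
      rw [← ENNReal.rpow_add _ _ hPk (hPfin k)]; simp
    have h3 : P k ^ (q - 1) * P k ^ (1 - q) = 1 := by
      rw [← ENNReal.rpow_add _ _ hPk (hPfin k)]; simp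
    calc P k ^ q * (∑' l : ℤ, ν (X ⁻¹' Lq.dyadic m l) ^ q)
        = P k ^ (q - 1) * (P k * (∑' l : ℤ, ν (X ⁻¹' Lq.dyadic m l) ^ q)) := by
          rw [← h2, mul_assoc]
      _ ≤ P k ^ (q - 1) * (P k ^ (1 - q) * (M * ∑' C, G k C ^ q)) := by gcongr
      _ = _ := by rw [← mul_assoc, h3, one_mul]
  -- third step
  have step3 : ∀ C : ℤ, ∑' k, G k C ^ q ≤ M * (c ^ q * ν (X ⁻¹' Lq.dyadic (n + m) C) ^ q) := by
    intro C
    by_cases hne : ∃ i ω, Y i ω ∈ Lq.dyadic (n + m) C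
    · obtain ⟨i₀, ω₁, hω₁⟩ := hne
      refine tsum_le_of_close _ _ K ⌈(2:ℝ) ^ n * Y i₀ ω₁⌉ (fun k => ?_) (fun k hk => ?_)
      · rw [← ENNReal.mul_rpow_of_nonneg _ _ hq0.le]
        gcongr
        refine le_trans (Finset.sum_le_sum fun i _ => ?_) (ha _ (measurableSet_dyadic (n + m) C))
        gcongr
        simp only [hpk]; split_ifs <;> simp
      · have : ∃ i, pk k i * ν (Y i ⁻¹' Lq.dyadic (n + m) C) ≠ 0 := by
          by_contra hcon
          push Not at hcon
          apply hk
          simp [hG, hcon, hq0]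
        obtain ⟨i, hi⟩ := this
        have hki : κ i = k := by
          by_contra h; simp [hpk, h] at hi
        have : ∃ ω, Y i ω ∈ Lq.dyadic (n + m) C := by
          by_contra hcon
          push Not at hcon
          have : Y i ⁻¹' Lq.dyadic (n + m) C = ∅ := by ext ω; simpa using hcon ω
          simp [this] at hi
        obtain ⟨ω, hω⟩ := this
        have h1 := hclose i ω
        rw [ceil_parent hω hω₁, hki, abs_sub_comm] at h1
        exact h1
    · push Not at hne
      have : ∀ i, Y i ⁻¹' Lq.dyadic (n + m) C = ∅ := fun i => by ext ω; simpa using hne i ω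
      simp [hG, this, hq0]
  calc (∑' k : ℤ, ν (X ⁻¹' Lq.dyadic n k) ^ q) * (∑' k : ℤ, ν (X ⁻¹' Lq.dyadic m k) ^ q)
      ≤ (c ^ q * (M * ∑' k, P k ^ q)) * (∑' k : ℤ, ν (X ⁻¹' Lq.dyadic m k) ^ q) := by gcongr
    _ = c ^ q * M * ∑' k, P k ^ q * (∑' k : ℤ, ν (X ⁻¹' Lq.dyadic m k) ^ q) := by
        rw [ENNReal.tsum_mul_right]; ring
    _ ≤ c ^ q * M * ∑' k, M * ∑' C, G k C ^ q := by
        exact mul_le_mul' le_rfl (ENNReal.tsum_le_tsum step2)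
    _ = c ^ q * M * (M * ∑' C, ∑' k, G k C ^ q) := by
        rw [ENNReal.tsum_mul_left, ENNReal.tsum_comm]
    _ ≤ c ^ q * M * (M * ∑' C : ℤ, M * (c ^ q * ν (X ⁻¹' Lq.dyadic (n + m) C) ^ q)) := by
        gcongr with C; exact step3 C
    _ = _ := by rw [ENNReal.tsum_mul_left, ENNReal.tsum_mul_left]; ring

end core

end LqAux

namespace LqAux

lemma one_le_esum (ρ : Measure ℝ) [IsProbabilityMeasure ρ] {q : ℝ} (hq0 : 0 < q) (hq1 : q ≤ 1)
    (n : ℕ) : 1 ≤ esum ρ q n := by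
  have h := measure_eq_tsum ρ id measurable_id n Set.univ MeasurableSet.univ
  simp only [measure_univ, Set.univ_inter, Set.preimage_id] at h
  calc (1:ℝ≥0∞) = (∑' k : ℤ, ρ (Lq.dyadic n k)) ^ q := by rw [← h]; simp
    _ ≤ _ := tsum_rpow_le _ hq0 hq1

lemma esum_le (ρ : Measure ℝ) [IsProbabilityMeasure ρ] (hρ : ρ (Set.Icc 0 1)ᶜ = 0) {q : ℝ}
    (hq0 : 0 < q) (n : ℕ) : esum ρ q n ≤ ((2 ^ n + 1 : ℕ) : ℝ≥0∞) := by
  have h2 : (0:ℝ) < 2 ^ n := by positivity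
  have : esum ρ q n = ∑ k ∈ Finset.Icc (0:ℤ) (2 ^ n), ρ (Lq.dyadic n k) ^ q := by
    refine tsum_eq_sum fun k hk => ?_
    have : ρ (Lq.dyadic n k) = 0 := by
      refine measure_mono_null (t := (Set.Icc (0:ℝ) 1)ᶜ) (fun y hy hy' => hk ?_) hρ
      rw [mem_dyadic_iff] at hy
      rw [← hy, Finset.mem_Icc]
      constructor
      · exact Int.ceil_nonneg (mul_nonneg h2.le hy'.1)
      · rw [Int.ceil_le]; push_cast
        nlinarith [hy'.2]
    simp [this, hq0]
  rw [this]
  refine (Finset.sum_le_card_nsmul _ _ 1 fun k _ => ?_).trans ?_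
  · exact ENNReal.rpow_le_one prob_le_one hq0.le
  · rw [nsmul_eq_mul, Int.card_Icc, mul_one]
    have e : (2 ^ n + 1 - 0 : ℤ) = ((2 ^ n + 1 : ℕ) : ℤ) := by push_cast; ring
    rw [e, Int.toNat_natCast]

lemma lqSum_eq (ρ : Measure ℝ) [IsProbabilityMeasure ρ] {q : ℝ} (hq0 : 0 < q) (n : ℕ) :
    Lq.lqSum ρ n q = (esum ρ q n).toReal := by
  rw [Lq.lqSum, esum, ENNReal.tsum_toReal_eq]
  · refine tsum_congr fun k => ?_
    rw [← ENNReal.toReal_rpow]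
    split_ifs with h
    · simp [h, hq0.ne']
    · rfl
  · intro k
    exact ENNReal.rpow_ne_top_of_nonneg hq0.le (measure_ne_top _ _)

lemma fekete (a : ℕ → ℝ) (h0 : ∀ n, 0 ≤ a n) (B : ℝ) (hub : ∀ n, a n ≤ B * (n + 1))
    (hsup : ∀ ε > 0, ∃ C : ℝ, ∀ n m : ℕ, a n + a m ≤ a (n + m) + (ε * n + C)) :
    ∃ L, Tendsto (fun n : ℕ => a n / n) atTop (𝓝 L) := by
  have hB : 0 ≤ B := by have := (h0 0).trans (hub 0); simpa using this
  have hu0 : ∀ n : ℕ, 0 ≤ a n / n := fun n => div_nonneg (h0 n) (Nat.cast_nonneg n)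
  have hu1 : ∀ n : ℕ, a n / n ≤ 2 * B := by
    intro n
    rcases Nat.eq_zero_or_pos n with rfl | hn
    · simp [hB]
    · have hn' : (1:ℝ) ≤ n := by exact_mod_cast hn
      rw [div_le_iff₀ (by linarith)]
      nlinarith [hub n]
  have hbdd : IsBoundedUnder (· ≤ ·) atTop (fun n : ℕ => a n / n) :=
    isBoundedUnder_of ⟨2 * B, hu1⟩
  have hcobdd : IsCoboundedUnder (· ≤ ·) atTop (fun n : ℕ => a n / n) :=
    IsBoundedUnder.isCoboundedUnder_le (isBoundedUnder_of ⟨0, hu0⟩)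
  set L := limsup (fun n : ℕ => a n / n) atTop with hL
  refine ⟨L, tendsto_order.2 ⟨fun l hl => ?_, fun l hl => eventually_lt_of_limsup_lt hl hbdd⟩⟩
  obtain ⟨ε, hε, hlε⟩ : ∃ ε > 0, l + 4 * ε < L := ⟨(L - l) / 8, by linarith, by linarith⟩
  obtain ⟨C, hC⟩ := hsup ε hε
  have hfreq : ∃ᶠ n : ℕ in atTop, L - ε < a n / n :=
    frequently_lt_of_lt_limsup hcobdd (by linarith)
  have hev : ∀ᶠ n : ℕ in atTop, C / n < ε :=
    (tendsto_const_div_atTop_nhds_zero_nat C).eventually (gt_mem_nhds hε)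
  obtain ⟨n, hn1, hn2, hn0⟩ := (hfreq.and_eventually (hev.and (eventually_gt_atTop 0))).exists
  have hn0' : (0:ℝ) < n := by exact_mod_cast hn0
  set s := a n - (ε * n + C) with hs
  have hs' : (L - 3 * ε) * n ≤ s := by
    rw [lt_div_iff₀ hn0'] at hn1
    rw [div_lt_iff₀ hn0'] at hn2
    rw [hs]; nlinarith
  have hiter : ∀ k r : ℕ, k * s ≤ a (k * n + r) := by
    intro k r
    induction k with
    | zero => simpa using h0 _
    | succ k ih =>
      have := hC n (k * n + r)
      have e : (k + 1) * n + r = n + (k * n + r) := by ring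
      rw [e]; push_cast; rw [hs] at ih ⊢; linarith
  have hev2 : ∀ᶠ N : ℕ in atTop, (|L - 3 * ε| * n) / N < ε :=
    (tendsto_const_div_atTop_nhds_zero_nat _).eventually (gt_mem_nhds hε)
  filter_upwards [hev2, eventually_gt_atTop 0] with N hN hN0
  have hN0' : (0:ℝ) < N := by exact_mod_cast hN0
  rw [div_lt_iff₀ hN0'] at hN
  rw [lt_div_iff₀ hN0']
  have h1 := hiter (N / n) (N % n)
  rw [Nat.div_add_mod'] at h1
  have h2 : (N:ℝ) = (N / n : ℕ) * n + (N % n : ℕ) := by exact_mod_cast (Nat.div_add_mod' N n).symm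
  have h3 : ((N % n : ℕ) : ℝ) ≤ n := by exact_mod_cast (Nat.mod_lt N hn0).le
  have h4 : (0:ℝ) ≤ (N % n : ℕ) := Nat.cast_nonneg _
  have h5 : ((N / n : ℕ) : ℝ) * ((L - 3 * ε) * n) ≤ (N / n : ℕ) * s := by gcongr
  have h6 : (L - 3 * ε) * (N % n : ℕ) ≤ |L - 3 * ε| * n :=
    mul_le_mul (le_abs_self _) h3 h4 (abs_nonneg _)
  have h7 : (L - 3 * ε) * N = ((N / n : ℕ) : ℝ) * ((L - 3 * ε) * n) + (L - 3 * ε) * (N % n : ℕ) := by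
    conv_lhs => rw [h2]
    ring
  nlinarith

/-- Existence of the limit from approximate supermultiplicativity. -/
theorem exists_limit (ρ : Measure ℝ) [IsProbabilityMeasure ρ] (hρ : ρ (Set.Icc 0 1)ᶜ = 0) {q : ℝ}
    (hq0 : 0 < q) (hq1 : q ≤ 1)
    (h : ∀ ε > 0, ∃ C : ℝ, ∀ n m : ℕ, esum ρ q n * esum ρ q m ≤
      ENNReal.ofReal (Real.exp (ε * n + C)) * esum ρ q (n + m)) :
    ∃ L : ℝ, Tendsto (fun n => Lq.betaN ρ n q) atTop (𝓝 L) := by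
  have hfin : ∀ n, esum ρ q n ≠ ⊤ := fun n =>
    ((esum_le ρ hρ hq0 n).trans_lt (ENNReal.natCast_lt_top _)).ne
  have h1 : ∀ n, 1 ≤ (esum ρ q n).toReal := fun n => by
    have := ENNReal.toReal_mono (hfin n) (one_le_esum ρ hq0 hq1 n)
    simpa using this
  have hpos : ∀ n, 0 < (esum ρ q n).toReal := fun n => by linarith [h1 n]
  obtain ⟨L, hL⟩ := fekete (fun n => Real.log (esum ρ q n).toReal)
    (fun n => Real.log_nonneg (h1 n)) (Real.log 2) (fun n => by
      have h2 : (esum ρ q n).toReal ≤ ((2 ^ n + 1 : ℕ) : ℝ) := by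
        have := ENNReal.toReal_mono (ENNReal.natCast_ne_top _) (esum_le ρ hρ hq0 n)
        rwa [ENNReal.toReal_natCast] at this
      have h3 : (esum ρ q n).toReal ≤ 2 ^ (n + 1) := by
        refine h2.trans ?_
        push_cast
        have : (1:ℝ) ≤ 2 ^ n := one_le_pow₀ (by norm_num)
        rw [pow_succ]; linarith
      calc Real.log (esum ρ q n).toReal ≤ Real.log (2 ^ (n + 1)) := Real.log_le_log (hpos n) h3
        _ = _ := by rw [Real.log_pow]; push_cast; ring) (fun ε hε => by
      obtain ⟨C, hC⟩ := h ε hε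
      refine ⟨C, fun n m => ?_⟩
      have h4 := ENNReal.toReal_mono (ENNReal.mul_ne_top ENNReal.ofReal_ne_top (hfin _)) (hC n m)
      rw [ENNReal.toReal_mul, ENNReal.toReal_mul, ENNReal.toReal_ofReal (Real.exp_pos _).le] at h4
      have h5 := Real.log_le_log (mul_pos (hpos n) (hpos m)) h4
      rw [Real.log_mul (hpos n).ne' (hpos m).ne', Real.log_mul (Real.exp_pos _).ne' (hpos _).ne',
        Real.log_exp] at h5
      linarith)
  refine ⟨L / Real.log 2, ?_⟩
  refine (hL.div_const (Real.log 2)).congr fun n => ?_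
  rw [Lq.betaN, lqSum_eq ρ hq0, div_div]

end LqAux

namespace LqAux

variable {N : ℕ}

lemma exists_upper (Φ : C1IFS N) : ∃ r : ℝ, 0 < r ∧ r < 1 ∧
    ∀ i, ∀ x ∈ Set.Icc (0:ℝ) 1, |Φ.T' i x| ≤ r := by
  have h1 : ∀ᶠ r : ℝ in 𝓝[<] 1, ∀ i, ∀ x ∈ Set.Icc (0:ℝ) 1, |Φ.T' i x| ≤ r := by
    rw [eventually_all]
    intro i
    obtain ⟨r, hr, h⟩ := Φ.contracting i
    filter_upwards [Ioo_mem_nhdsLT hr] with s hs x hx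
    exact (h x hx).trans hs.1.le
  obtain ⟨r, h, hr⟩ := (h1.and (Ioo_mem_nhdsLT (zero_lt_one (α := ℝ)))).exists
  exact ⟨r, hr.1, hr.2, h⟩

lemma exists_lower (Φ : C1IFS N) : ∃ c : ℝ, 0 < c ∧ c < 1 ∧
    ∀ i, ∀ x ∈ Set.Icc (0:ℝ) 1, c ≤ |Φ.T' i x| := by
  have h1 : ∀ᶠ r : ℝ in 𝓝[>] 0, ∀ i, ∀ x ∈ Set.Icc (0:ℝ) 1, r ≤ |Φ.T' i x| := by
    rw [eventually_all]
    intro i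
    obtain ⟨r, hr, h⟩ := Φ.deriv_bdd_below i
    filter_upwards [Ioo_mem_nhdsGT hr] with s hs x hx
    exact hs.2.le.trans (h x hx)
  obtain ⟨r, h, hr⟩ := (h1.and (Ioo_mem_nhdsGT (zero_lt_one (α := ℝ)))).exists
  exact ⟨r, hr.1, hr.2, h⟩

lemma mvt_lt (Φ : C1IFS N) (i : Fin N) {x y : ℝ} (hx : x ∈ Set.Icc (0:ℝ) 1)
    (hy : y ∈ Set.Icc (0:ℝ) 1) (hxy : x < y) :
    ∃ ξ ∈ Set.Icc (0:ℝ) 1, |ξ - x| ≤ |x - y| ∧ |ξ - y| ≤ |x - y| ∧ |Φ.T i x - Φ.T i y| = |Φ.T' i ξ| * |x - y| := by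
  obtain ⟨ξ, hξ, h⟩ := exists_hasDerivAt_eq_slope (Φ.T i) (Φ.T' i) hxy
    (fun z hz => ((Φ.hderiv i z ⟨hx.1.trans hz.1, hz.2.trans hy.2⟩).continuousWithinAt).mono
      (Set.Icc_subset_Icc hx.1 hy.2))
    (fun z hz => (Φ.hderiv i z ⟨hx.1.trans hz.1.le, hz.2.le.trans hy.2⟩).hasDerivAt
      (Icc_mem_nhds (hx.1.trans_lt hz.1) (hz.2.trans_le hy.2)))
  refine ⟨ξ, ⟨hx.1.trans hξ.1.le, hξ.2.le.trans hy.2⟩, ?_, ?_, ?_⟩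
  · rw [abs_sub_comm x y, abs_sub_comm, abs_of_neg (sub_neg.2 hξ.1), abs_of_pos (sub_pos.2 hxy)]
    linarith [hξ.2]
  · rw [abs_sub_comm x y, abs_sub_comm ξ y, abs_of_pos (sub_pos.2 hξ.2), abs_of_pos (sub_pos.2 hxy)]
    linarith [hξ.1]
  · have h0 : y - x ≠ 0 := (sub_pos.2 hxy).ne'
    rw [abs_sub_comm, abs_sub_comm x y, ← abs_mul, h, div_mul_cancel₀ _ h0]

lemma mvt (Φ : C1IFS N) (i : Fin N) {x y : ℝ} (hx : x ∈ Set.Icc (0:ℝ) 1)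
    (hy : y ∈ Set.Icc (0:ℝ) 1) :
    ∃ ξ ∈ Set.Icc (0:ℝ) 1, |ξ - x| ≤ |x - y| ∧ |Φ.T i x - Φ.T i y| = |Φ.T' i ξ| * |x - y| := by
  rcases lt_trichotomy x y with h | h | h
  · obtain ⟨ξ, hξ, h1, -, h2⟩ := mvt_lt Φ i hx hy h
    exact ⟨ξ, hξ, h1, h2⟩
  · subst h; exact ⟨x, hx, by simp, by simp⟩
  · obtain ⟨ξ, hξ, -, h1, h2⟩ := mvt_lt Φ i hy hx h
    rw [abs_sub_comm (Φ.T i y), abs_sub_comm y x] at h2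
    exact ⟨ξ, hξ, by rwa [abs_sub_comm x y], h2⟩

lemma wordMap_mem (Φ : C1IFS N) (w : Word N) {x : ℝ} (hx : x ∈ Set.Icc (0:ℝ) 1) :
    wordMap Φ w x ∈ Set.Icc (0:ℝ) 1 := by
  induction w with
  | nil => exact hx
  | cons i w ih => exact Φ.maps_into i ih

lemma wordMap_append (Φ : C1IFS N) (w v : Word N) (x : ℝ) :
    wordMap Φ (w ++ v) x = wordMap Φ w (wordMap Φ v x) := by
  induction w with
  | nil => rfl
  | cons i w ih => simp [wordMap, ih]

lemma wordMap_lip (Φ : C1IFS N) {r : ℝ} (hr0 : 0 < r)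
    (hr : ∀ i, ∀ x ∈ Set.Icc (0:ℝ) 1, |Φ.T' i x| ≤ r) (w : Word N) {x y : ℝ}
    (hx : x ∈ Set.Icc (0:ℝ) 1) (hy : y ∈ Set.Icc (0:ℝ) 1) :
    |wordMap Φ w x - wordMap Φ w y| ≤ r ^ w.length * |x - y| := by
  induction w with
  | nil => simp [wordMap]
  | cons i w ih =>
    obtain ⟨ξ, hξ, -, h⟩ := mvt Φ i (wordMap_mem Φ w hx) (wordMap_mem Φ w hy)
    simp only [wordMap, Function.comp, List.length_cons]
    rw [h, pow_succ', mul_assoc]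
    exact mul_le_mul (hr i ξ hξ) ih (abs_nonneg _) hr0.le

lemma modulus (Φ : C1IFS N) {r : ℝ} (hr0 : 0 < r) (hr1 : r < 1)
    (hr : ∀ i, ∀ x ∈ Set.Icc (0:ℝ) 1, |Φ.T' i x| ≤ r) {c : ℝ} (hc0 : 0 < c)
    (hc : ∀ i, ∀ x ∈ Set.Icc (0:ℝ) 1, c ≤ |Φ.T' i x|) (hc1 : c < 1) {ε : ℝ} (hε : 0 < ε) :
    ∃ (k₀ : ℕ) (B : ℝ), 0 ≤ B ∧ ∀ (k : ℕ) (i : Fin N), ∀ ξ ∈ Set.Icc (0:ℝ) 1,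
      ∀ η ∈ Set.Icc (0:ℝ) 1, |ξ - η| ≤ 3 * r ^ k →
        |Φ.T' i ξ| ≤ Real.exp (if k < k₀ then B else ε) * |Φ.T' i η| := by
  have huc : ∀ i, ∃ δ > 0, ∀ ξ ∈ Set.Icc (0:ℝ) 1, ∀ η ∈ Set.Icc (0:ℝ) 1, |ξ - η| < δ →
      |Φ.T' i ξ - Φ.T' i η| < c * ε := by
    intro i
    have := isCompact_Icc.uniformContinuousOn_of_continuous (Φ.cont_deriv i)
    exact Metric.uniformContinuousOn_iff.1 this (c * ε) (by positivity)
  choose δ hδ0 hδ using huc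
  have hlim : Tendsto (fun k : ℕ => 3 * r ^ k) atTop (𝓝 0) := by
    simpa using (tendsto_pow_atTop_nhds_zero_of_lt_one hr0.le hr1).const_mul 3
  have hev : ∀ᶠ k : ℕ in atTop, ∀ i, 3 * r ^ k < δ i :=
    eventually_all.2 fun i => hlim.eventually (gt_mem_nhds (hδ0 i))
  obtain ⟨k₀, hk₀⟩ := eventually_atTop.1 hev
  refine ⟨k₀, -Real.log c, by have := Real.log_neg hc0 hc1; linarith, ?_⟩
  intro k i ξ hξ η hη hd
  split_ifs with h
  · rw [Real.exp_neg, Real.exp_log hc0]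
    calc |Φ.T' i ξ| ≤ 1 := (hr i ξ hξ).trans hr1.le
      _ = c⁻¹ * c := (inv_mul_cancel₀ hc0.ne').symm
      _ ≤ _ := by gcongr; exact hc i η hη
  · have h1 := hδ i ξ hξ η hη (hd.trans_lt (hk₀ k (not_lt.1 h) i))
    have h2 := abs_sub_abs_le_abs_sub (Φ.T' i ξ) (Φ.T' i η)
    have h3 := hc i η hη
    have h4 := Real.add_one_le_exp ε
    calc |Φ.T' i ξ| ≤ |Φ.T' i η| + c * ε := by linarith
      _ ≤ |Φ.T' i η| + |Φ.T' i η| * ε := by gcongr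
      _ = (ε + 1) * |Φ.T' i η| := by ring
      _ ≤ _ := by gcongr

lemma sum_le (k₀ : ℕ) {B ε : ℝ} (hB : 0 ≤ B) (hε : 0 < ε) (n : ℕ) :
    ∑ k ∈ Finset.range n, (if k < k₀ then B else ε) ≤ ε * n + B * k₀ := by
  suffices h : ∑ k ∈ Finset.range n, (if k < k₀ then B else ε) ≤ ε * n + B * (min n k₀ : ℕ) by
    refine h.trans ?_
    gcongr
    exact min_le_right _ _
  induction n with
  | zero => simp
  | succ n ih =>
    rw [Finset.sum_range_succ]
    split_ifs with h
    · rw [min_eq_left h.le] at ih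
      rw [min_eq_left (by omega)]
      push_cast; nlinarith
    · rw [min_eq_right (by omega)] at ih ⊢
      push_cast; nlinarith

lemma distortion (Φ : C1IFS N) {ε : ℝ} (hε : 0 < ε) : ∃ C : ℝ, 0 ≤ C ∧ ∀ w : Word N,
    ∀ x ∈ Set.Icc (0:ℝ) 1, ∀ y ∈ Set.Icc (0:ℝ) 1, ∀ u ∈ Set.Icc (0:ℝ) 1, ∀ v ∈ Set.Icc (0:ℝ) 1,
      |wordMap Φ w x - wordMap Φ w y| * |u - v| ≤
        Real.exp (ε * w.length + C) * (|wordMap Φ w u - wordMap Φ w v| * |x - y|) := by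
  obtain ⟨r, hr0, hr1, hr⟩ := exists_upper Φ
  obtain ⟨c, hc0, hc1, hc⟩ := exists_lower Φ
  obtain ⟨k₀, B, hB, hmod⟩ := modulus Φ hr0 hr1 hr hc0 hc hc1 hε
  refine ⟨B * k₀, by positivity, fun w x hx y hy u hu v hv => ?_⟩
  suffices h : |wordMap Φ w x - wordMap Φ w y| * |u - v| ≤
      Real.exp (∑ k ∈ Finset.range w.length, (if k < k₀ then B else ε)) *
        (|wordMap Φ w u - wordMap Φ w v| * |x - y|) by
    refine h.trans ?_
    gcongr
    exact sum_le k₀ hB hε _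
  induction w with
  | nil => simp [wordMap, mul_comm]
  | cons i w ih =>
    have lip : ∀ s ∈ Set.Icc (0:ℝ) 1, ∀ t ∈ Set.Icc (0:ℝ) 1,
        |wordMap Φ w s - wordMap Φ w t| ≤ r ^ w.length := by
      intro s hs t ht
      refine (wordMap_lip Φ hr0 hr w hs ht).trans ?_
      have : |s - t| ≤ 1 := by
        rw [abs_le]; constructor <;> linarith [hs.1, hs.2, ht.1, ht.2]
      exact mul_le_of_le_one_right (by positivity) this
    obtain ⟨ξ, hξ, hξ1, h1⟩ := mvt Φ i (wordMap_mem Φ w hx) (wordMap_mem Φ w hy)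
    obtain ⟨η, hη, hη1, h2⟩ := mvt Φ i (wordMap_mem Φ w hu) (wordMap_mem Φ w hv)
    have h3 : |ξ - η| ≤ 3 * r ^ w.length := by
      have a1 := hξ1.trans (lip x hx y hy)
      have a2 := hη1.trans (lip u hu v hv)
      have a3 := lip x hx u hu
      rw [abs_le] at a1 a2 a3 ⊢
      constructor <;> linarith [a1.1, a1.2, a2.1, a2.2, a3.1, a3.2]
    have h4 := hmod w.length i ξ hξ η hη h3
    simp only [wordMap, Function.comp, List.length_cons]
    rw [h1, h2, Finset.sum_range_succ, Real.exp_add]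
    calc |Φ.T' i ξ| * |wordMap Φ w x - wordMap Φ w y| * |u - v|
        = |Φ.T' i ξ| * (|wordMap Φ w x - wordMap Φ w y| * |u - v|) := by ring
      _ ≤ _ := mul_le_mul h4 ih (by positivity) (by positivity)
      _ = _ := by ring

lemma cat_cons (i : Fin N) (w : Word N) (x : SeqSp N) : cat (i :: w) x = cat [i] (cat w x) := by
  funext k
  cases k with
  | zero => simp [cat]
  | succ k => simp [cat]

lemma cat_nil (x : SeqSp N) : cat [] x = x := by
  funext k; simp [cat]

lemma cat_append (w v : Word N) (x : SeqSp N) : cat (w ++ v) x = cat w (cat v x) := by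
  induction w with
  | nil => simp [cat_nil]
  | cons i w ih => rw [List.cons_append, cat_cons, ih, ← cat_cons]

lemma continuous_cat (w : Word N) : Continuous (cat w) := by
  refine continuous_pi fun k => ?_
  by_cases h : k < w.length
  · simp only [cat, h, dite_true]; exact continuous_const
  · simp only [cat, h, dite_false]; exact continuous_apply _

lemma cat_agree (w : Word N) (x y : SeqSp N) (k : ℕ) (hk : k < w.length) :
    cat w x k = cat w y k := by
  simp [cat, hk]

lemma coding_mem (Φ : C1IFS N) (π : SeqSp N → ℝ) (hπ : IsCoding Φ π) (x : SeqSp N) :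
    π x ∈ Set.Icc (0:ℝ) 1 := by
  simpa [wordMap] using hπ x 0

lemma coding_cat_one (Φ : C1IFS N) (π : SeqSp N → ℝ) (hπ : IsCoding Φ π) (i : Fin N)
    (x : SeqSp N) : π (cat [i] x) = Φ.T i (π x) := by
  obtain ⟨r, hr0, hr1, hr⟩ := exists_upper Φ
  have h : ∀ m : ℕ, |π (cat [i] x) - Φ.T i (π x)| ≤ r ^ m := by
    intro m
    obtain ⟨a, ha, h1⟩ := hπ (cat [i] x) (m + 1)
    obtain ⟨b, hb, h2⟩ := hπ x m
    have e : (List.ofFn fun j : Fin (m + 1) => cat [i] x j) =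
        i :: List.ofFn fun j : Fin m => x j := by
      rw [List.ofFn_succ]
      simp [cat]
    rw [e] at h1
    have h2' : wordMap Φ (i :: List.ofFn fun j : Fin m => x j) b = Φ.T i (π x) := by
      simp [wordMap, h2]
    rw [← h1, ← h2']
    refine (wordMap_lip Φ hr0 hr _ ha hb).trans ?_
    have : |a - b| ≤ 1 := by
      rw [abs_le]; constructor <;> linarith [ha.1, ha.2, hb.1, hb.2]
    simp only [List.length_cons, List.length_ofFn]
    calc r ^ (m + 1) * |a - b| ≤ r ^ m * 1 := by
          gcongr ?_ * ?_
          exact pow_le_pow_of_le_one hr0.le hr1.le (Nat.le_succ m)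
      _ = _ := mul_one _
  have := ge_of_tendsto' (tendsto_pow_atTop_nhds_zero_of_lt_one hr0.le hr1) h
  exact sub_eq_zero.1 (abs_nonpos_iff.1 this)

lemma coding_cat (Φ : C1IFS N) (π : SeqSp N → ℝ) (hπ : IsCoding Φ π) (w : Word N)
    (x : SeqSp N) : π (cat w x) = wordMap Φ w (π x) := by
  induction w with
  | nil => simp [cat_nil, wordMap]
  | cons i w ih => rw [cat_cons, coding_cat_one Φ π hπ, ih]; rfl

end LqAux

namespace LqAux

variable {N : ℕ}

/-- Birkhoff-type sum along a word: `gpot ψ w x = S_{|w|} ψ (w x)`. -/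
def gpot (ψ : SeqSp N → ℝ) : Word N → SeqSp N → ℝ
  | [], _ => 0
  | i :: w, x => ψ (cat (i :: w) x) + gpot ψ w x

lemma gpot_snoc (ψ : SeqSp N → ℝ) (w : Word N) (i : Fin N) (x : SeqSp N) :
    gpot ψ (w ++ [i]) x = gpot ψ w (cat [i] x) + ψ (cat [i] x) := by
  induction w with
  | nil => simp [gpot]
  | cons j w ih =>
    rw [List.cons_append, gpot, ih, gpot, ← List.cons_append, cat_append]
    ring

lemma continuous_gpot (ψ : SeqSp N → ℝ) (hψ : Continuous ψ) (w : Word N) :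
    Continuous (gpot ψ w) := by
  induction w with
  | nil => exact continuous_const
  | cons i w ih => exact (hψ.comp (continuous_cat _)).add ih

lemma psi_modulus (ψ : SeqSp N → ℝ) (hψ : Continuous ψ) {ε : ℝ} (hε : 0 < ε) :
    ∃ (k₀ : ℕ) (B : ℝ), 0 ≤ B ∧ ∀ (k : ℕ) (x y : SeqSp N), (∀ j < k, x j = y j) →
      ψ x ≤ ψ y + if k < k₀ then B else ε := by
  have h1 : ∀ x : SeqSp N, ∃ n : ℕ, ∀ y ∈ PiNat.cylinder x n, |ψ y - ψ x| < ε / 2 := by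
    intro x
    have hopen : IsOpen {y | |ψ y - ψ x| < ε / 2} :=
      isOpen_lt (by fun_prop) continuous_const
    obtain ⟨v, ⟨z, n, rfl⟩, hx, hv⟩ :=
      (PiNat.isTopologicalBasis_cylinders (fun _ : ℕ => Fin N)).exists_subset_of_mem_open
        (show x ∈ {y | |ψ y - ψ x| < ε / 2} by simpa using half_pos hε) hopen
    rw [← PiNat.mem_cylinder_iff_eq.1 hx] at hv
    exact ⟨n, fun y hy => hv hy⟩
  choose n hn using h1
  obtain ⟨t, ht⟩ := isCompact_univ.elim_finite_subcover
    (fun x : SeqSp N => PiNat.cylinder x (n x))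
    (fun x => PiNat.isOpen_cylinder (fun _ : ℕ => Fin N) x (n x))
    (fun x _ => Set.mem_iUnion.2 ⟨x, PiNat.self_mem_cylinder _ _⟩)
  obtain ⟨b, hb⟩ := (isCompact_univ (X := SeqSp N)).exists_bound_of_continuousOn hψ.continuousOn
  refine ⟨t.sup n, 2 * |b|, by positivity, fun k x y hxy => ?_⟩
  split_ifs with hk
  · have a1 := hb x trivial
    have a2 := hb y trivial
    rw [Real.norm_eq_abs] at a1 a2
    have a3 := abs_le.1 (a1.trans (le_abs_self b))
    have a4 := abs_le.1 (a2.trans (le_abs_self b))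
    linarith [a3.2, a4.1]
  · obtain ⟨z, hz, hxz⟩ : ∃ z ∈ t, x ∈ PiNat.cylinder z (n z) := by
      have := ht (Set.mem_univ x)
      simpa using this
    have hyz : y ∈ PiNat.cylinder z (n z) := by
      intro j hj
      rw [← hxz j hj]
      exact (hxy j (hj.trans_le ((Finset.le_sup hz).trans (not_lt.1 hk)))).symm
    have a1 := abs_lt.1 (hn z x hxz)
    have a2 := abs_lt.1 (hn z y hyz)
    linarith [a1.2, a2.1]

lemma gpot_distortion (ψ : SeqSp N → ℝ) (hψ : Continuous ψ) {ε : ℝ} (hε : 0 < ε) :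
    ∃ C : ℝ, 0 ≤ C ∧ ∀ (w : Word N) (x y : SeqSp N),
      gpot ψ w x ≤ gpot ψ w y + (ε * w.length + C) := by
  obtain ⟨k₀, B, hB, hmod⟩ := psi_modulus ψ hψ hε
  refine ⟨B * k₀, by positivity, fun w x y => ?_⟩
  suffices h : gpot ψ w x ≤ gpot ψ w y +
      ∑ k ∈ Finset.range w.length, (if k < k₀ then B else ε) by
    have := sum_le k₀ hB hε w.length
    linarith
  induction w with
  | nil => simp [gpot]
  | cons i w ih =>
    rw [List.length_cons, Finset.sum_range_succ, gpot, gpot]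
    have := hmod w.length (cat (i :: w) x) (cat (i :: w) y)
      (fun j hj => cat_agree _ _ _ _ (by simp; omega))
    linarith

lemma integrable_cont (ν : Measure (SeqSp N)) [IsProbabilityMeasure ν] (f : SeqSp N → ℝ)
    (hf : Continuous f) : Integrable f ν :=
  hf.integrable_of_hasCompactSupport (HasCompactSupport.of_compactSpace f)

lemma transfer_lintegral (ψ : SeqSp N → ℝ) (hψc : Continuous ψ)
    (ν : Measure (SeqSp N)) [IsProbabilityMeasure ν] (hν : IsTransferFixed ψ ν)
    (f : SeqSp N → ℝ≥0∞) (hf : Measurable f) :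
    ∫⁻ x, f x ∂ν = ∑ i : Fin N, ∫⁻ x, ENNReal.ofReal (Real.exp (ψ (cat [i] x))) *
      f (cat [i] x) ∂ν := by
  have hdens : ∀ i : Fin N, Measurable fun x => ENNReal.ofReal (Real.exp (ψ (cat [i] x))) :=
    fun i => ((Real.continuous_exp.comp (hψc.comp (continuous_cat [i]))).measurable).ennreal_ofReal
  have hcat : ∀ i : Fin N, Measurable (cat [i]) := fun i => (continuous_cat [i]).measurable
  set ν' : Measure (SeqSp N) := ∑ i : Fin N, Measure.map (cat [i])
    (ν.withDensity fun x => ENNReal.ofReal (Real.exp (ψ (cat [i] x)))) with hν'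
  have hl : ∀ f : SeqSp N → ℝ≥0∞, Measurable f → ∫⁻ x, f x ∂ν' =
      ∑ i : Fin N, ∫⁻ x, ENNReal.ofReal (Real.exp (ψ (cat [i] x))) * f (cat [i] x) ∂ν := by
    intro f hf
    rw [hν', lintegral_finsetSum_measure]
    refine Finset.sum_congr rfl fun i _ => ?_
    rw [lintegral_map hf (hcat i)]
    exact lintegral_withDensity_eq_lintegral_mul _ (hdens i) (hf.comp (hcat i))
  suffices h : ν = ν' by rw [← hl f hf, ← h]
  refine ext_of_forall_lintegral_eq_of_IsFiniteMeasure fun g => ?_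
  have hgc : Continuous fun x => ((g x : ℝ≥0) : ℝ) := NNReal.continuous_coe.comp g.continuous
  have hgm : Measurable fun x => ((g x : ℝ≥0) : ℝ≥0∞) :=
    (measurable_coe_nnreal_ennreal).comp g.continuous.measurable
  have htc : Continuous (transfer ψ fun x => ((g x : ℝ≥0) : ℝ)) := by
    unfold transfer
    refine continuous_finsetSum _ fun i _ => ?_
    exact (Real.continuous_exp.comp (hψc.comp (continuous_cat [i]))).mul
      (hgc.comp (continuous_cat [i]))
  have h1 := hν _ hgc
  have h2 := ofReal_integral_eq_lintegral_ofReal (integrable_cont ν _ hgc)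
    (Eventually.of_forall fun x => NNReal.coe_nonneg _)
  have h3 := ofReal_integral_eq_lintegral_ofReal (integrable_cont ν _ htc)
    (Eventually.of_forall fun x => Finset.sum_nonneg fun i _ =>
      mul_nonneg (Real.exp_pos _).le (NNReal.coe_nonneg _))
  rw [hl _ hgm]
  simp only [ENNReal.ofReal_coe_nnreal] at h2
  rw [← h2, ← h1, h3, ← lintegral_finsetSum]
  · refine lintegral_congr fun x => ?_
    rw [transfer, ENNReal.ofReal_sum_of_nonneg]
    · refine Finset.sum_congr rfl fun i _ => ?_
      rw [ENNReal.ofReal_mul (Real.exp_pos _).le, ENNReal.ofReal_coe_nnreal]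
    · exact fun i _ => mul_nonneg (Real.exp_pos _).le (NNReal.coe_nonneg _)
  · intro i _
    exact (hdens i).mul (hgm.comp (hcat i))

/-- Weight of a word. -/
def wt (ψ : SeqSp N → ℝ) (w : Word N) (x : SeqSp N) : ℝ≥0∞ :=
  ENNReal.ofReal (Real.exp (gpot ψ w x))

lemma measurable_wt (ψ : SeqSp N → ℝ) (hψ : Continuous ψ) (w : Word N) : Measurable (wt ψ w) :=
  ((Real.continuous_exp.comp (continuous_gpot ψ hψ w)).measurable).ennreal_ofReal

/-- The family of words obtained by stopping at scale `s`. -/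
lemma stopping (Φ : C1IFS N) (ψ : SeqSp N → ℝ) (hψc : Continuous ψ)
    (ν : Measure (SeqSp N)) [IsProbabilityMeasure ν] (hν : IsTransferFixed ψ ν)
    {ε C c s : ℝ} (hε : 0 < ε) (hC : 0 ≤ C) (hc0 : 0 < c) (hc1 : c < 1) (hs0 : 0 < s) (hs1 : s ≤ 1)
    (hc : ∀ i, ∀ x ∈ Set.Icc (0:ℝ) 1, c ≤ |Φ.T' i x|)
    (hdist : ∀ w : Word N,
      ∀ x ∈ Set.Icc (0:ℝ) 1, ∀ y ∈ Set.Icc (0:ℝ) 1, ∀ u ∈ Set.Icc (0:ℝ) 1, ∀ v ∈ Set.Icc (0:ℝ) 1,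
      |wordMap Φ w x - wordMap Φ w y| * |u - v| ≤
        Real.exp (ε * w.length + C) * (|wordMap Φ w u - wordMap Φ w v| * |x - y|)) (k : ℕ) :
    ∃ W : List (Word N),
      (∀ f : SeqSp N → ℝ≥0∞, Measurable f →
        ∫⁻ x, f x ∂ν = (W.map fun w => ∫⁻ x, wt ψ w x * f (cat w x) ∂ν).sum) ∧
      ∀ w ∈ W, w.length ≤ k ∧
        (|wordMap Φ w 1 - wordMap Φ w 0| ≤ s ∨ w.length = k) ∧
        s * c ≤ Real.exp (ε * w.length + C) * |wordMap Φ w 1 - wordMap Φ w 0| := by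
  induction k with
  | zero =>
    refine ⟨[[]], fun f hf => ?_, fun w hw => ?_⟩
    · simp [wt, gpot, cat_nil]
    · rw [List.mem_singleton] at hw
      subst hw
      refine ⟨le_rfl, Or.inr rfl, ?_⟩
      simp only [wordMap, id, List.length_nil]
      have : (1:ℝ) ≤ Real.exp (ε * (0:ℕ) + C) := Real.one_le_exp (by simpa using hC)
      simp only [sub_zero, abs_one, mul_one]
      nlinarith
  | succ k ih =>
    obtain ⟨W, h1, h2⟩ := ih
    refine ⟨W.flatMap fun w => if |wordMap Φ w 1 - wordMap Φ w 0| ≤ s then [w] else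
      (List.finRange N).map fun i => w ++ [i], fun f hf => ?_, fun w hw => ?_⟩
    · rw [h1 f hf, List.map_flatMap, List.flatMap_def, List.sum_flatten, List.map_map]
      congr 1
      refine List.map_congr_left fun w hw => ?_
      simp only [Function.comp]
      split_ifs with h
      · simp
      · rw [transfer_lintegral ψ hψc ν hν (fun x => wt ψ w x * f (cat w x))
          ((measurable_wt ψ hψc w).mul (hf.comp (continuous_cat w).measurable)), List.map_map]
        rw [← List.ofFn_eq_map, List.sum_ofFn]
        refine Finset.sum_congr rfl fun i _ => lintegral_congr fun x => ?_
        simp only [wt]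
        rw [gpot_snoc, cat_append, Real.exp_add, ENNReal.ofReal_mul (Real.exp_pos _).le]
        ring
    · obtain ⟨v, hv, hwv⟩ := List.mem_flatMap.1 hw
      obtain ⟨a1, a2, a3⟩ := h2 v hv
      split_ifs at hwv with h
      · rw [List.mem_singleton] at hwv
        subst hwv
        exact ⟨a1.trans (Nat.le_succ k), Or.inl h, a3⟩
      · obtain ⟨i, -, rfl⟩ := List.mem_map.1 hwv
        have hk : v.length = k := a2.resolve_left h
        refine ⟨by simp [hk], Or.inr (by simp [hk]), ?_⟩
        have i0 : (0:ℝ) ∈ Set.Icc (0:ℝ) 1 := by simp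
        have i1 : (1:ℝ) ∈ Set.Icc (0:ℝ) 1 := by simp
        rw [wordMap_append, wordMap_append]
        have e : ∀ x, wordMap Φ [i] x = Φ.T i x := fun x => rfl
        rw [e, e]
        have b1 := hdist v 1 i1 0 i0 (Φ.T i 1) (Φ.maps_into i i1) (Φ.T i 0) (Φ.maps_into i i0)
        obtain ⟨ξ, hξ, -, b2⟩ := mvt Φ i i1 i0
        have b3 := hc i ξ hξ
        simp only [sub_zero, abs_one, mul_one] at b1 b2
        push Not at h
        calc s * c ≤ |wordMap Φ v 1 - wordMap Φ v 0| * |Φ.T i 1 - Φ.T i 0| := by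
              rw [b2]; gcongr
          _ ≤ _ := b1
          _ ≤ _ := by gcongr; simp

end LqAux

namespace LqAux

variable {N : ℕ}

/-- Total mass of a word. -/
def mass (ψ : SeqSp N → ℝ) (ν : Measure (SeqSp N)) (w : Word N) : ℝ≥0∞ := ∫⁻ x, wt ψ w x ∂ν

lemma wt_le_mass (ψ : SeqSp N → ℝ) (ν : Measure (SeqSp N)) [IsProbabilityMeasure ν] (w : Word N)
    {H : ℝ} (hH : ∀ x y, gpot ψ w x ≤ gpot ψ w y + H) (x : SeqSp N) :
    wt ψ w x ≤ ENNReal.ofReal (Real.exp H) * mass ψ ν w := by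
  calc wt ψ w x = ∫⁻ _, wt ψ w x ∂ν := by simp
    _ ≤ ∫⁻ y, ENNReal.ofReal (Real.exp H) * wt ψ w y ∂ν := by
        refine lintegral_mono fun y => ?_
        simp only [wt]
        rw [← ENNReal.ofReal_mul (Real.exp_pos _).le, ← Real.exp_add]
        exact ENNReal.ofReal_le_ofReal (Real.exp_le_exp.2 (by linarith [hH x y]))
    _ = _ := lintegral_const_mul' _ _ ENNReal.ofReal_ne_top

lemma mass_le_wt (ψ : SeqSp N → ℝ) (ν : Measure (SeqSp N)) [IsProbabilityMeasure ν] (w : Word N)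
    {H : ℝ} (hH : ∀ x y, gpot ψ w x ≤ gpot ψ w y + H) (x : SeqSp N) :
    mass ψ ν w ≤ ENNReal.ofReal (Real.exp H) * wt ψ w x := by
  calc mass ψ ν w ≤ ∫⁻ _, ENNReal.ofReal (Real.exp H) * wt ψ w x ∂ν := by
        refine lintegral_mono fun y => ?_
        simp only [wt]
        rw [← ENNReal.ofReal_mul (Real.exp_pos _).le, ← Real.exp_add]
        exact ENNReal.ofReal_le_ofReal (Real.exp_le_exp.2 (by linarith [hH y x]))
    _ = _ := by simp

theorem supermult (Φ : C1IFS N) (π : SeqSp N → ℝ) (hπ : IsCoding Φ π) (hπc : Continuous π)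
    (ψ : SeqSp N → ℝ) (hψc : Continuous ψ)
    (ν : Measure (SeqSp N)) [IsProbabilityMeasure ν] (hν : IsTransferFixed ψ ν)
    {q : ℝ} (hq0 : 0 < q) (hq1 : q ≤ 1) {ε : ℝ} (hε : 0 < ε) :
    ∃ C : ℝ, ∀ n m : ℕ, esum (ν.map π) q n * esum (ν.map π) q m ≤
      ENNReal.ofReal (Real.exp (ε * n + C)) * esum (ν.map π) q (n + m) := by
  obtain ⟨r, hr0, hr1, hr⟩ := exists_upper Φ
  obtain ⟨c, hc0, hc1, hc⟩ := exists_lower Φ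
  obtain ⟨A, hA⟩ : ∃ A : ℕ, r ^ A < 1 / 2 := exists_pow_lt_of_lt_one (by norm_num) hr1
  set ε' := ε / (8 * (A + 1)) with hε'
  have hε'0 : 0 < ε' := by positivity
  have hε'A : 8 * (ε' * A) ≤ ε := by
    have : ε = 8 * (ε' * (A + 1)) := by rw [hε']; field_simp
    nlinarith
  obtain ⟨C₁, hC₁, hdist⟩ := distortion Φ hε'0
  obtain ⟨C₂, hC₂, hgd⟩ := gpot_distortion ψ hψc hε'0
  refine ⟨6 * C₁ + 2 * C₂ + 3 * Real.log (5 / c), fun n m => ?_⟩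
  set s : ℝ := (2 ^ n)⁻¹ with hs
  have h2n : (0:ℝ) < 2 ^ n := by positivity
  have hs0 : 0 < s := by positivity
  have hs1 : s ≤ 1 := inv_le_one_of_one_le₀ (one_le_pow₀ (by norm_num))
  obtain ⟨W, hW, hW'⟩ := stopping Φ ψ hψc ν hν hε'0 hC₁ hc0 hc1 hs0 hs1 hc hdist (A * n)
  set D : ℝ := ε' * ((A * n : ℕ) : ℝ) + C₁ with hD
  set H : ℝ := ε' * ((A * n : ℕ) : ℝ) + C₂ with hH
  have hD0 : 0 ≤ D := by positivity
  have hH0 : 0 ≤ H := by positivity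
  clear_value D H
  have i0 : (0:ℝ) ∈ Set.Icc (0:ℝ) 1 := by simp
  have i1 : (1:ℝ) ∈ Set.Icc (0:ℝ) 1 := by simp
  have abs1 : ∀ x ∈ Set.Icc (0:ℝ) 1, ∀ y ∈ Set.Icc (0:ℝ) 1, |x - y| ≤ 1 := by
    intro x hx y hy
    rw [abs_le]; constructor <;> linarith [hx.1, hx.2, hy.1, hy.2]
  -- properties of the stopped words
  have hlen : ∀ w ∈ W, Real.exp (ε' * w.length + C₁) ≤ Real.exp D := by
    intro w hw
    have := (hW' w hw).1
    rw [hD]; gcongr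
  have hsmall : ∀ w ∈ W, |wordMap Φ w 1 - wordMap Φ w 0| ≤ s := by
    intro w hw
    rcases (hW' w hw).2.1 with h | h
    · exact h
    · refine (wordMap_lip Φ hr0 hr w i1 i0).trans ?_
      rw [h, pow_mul, hs, ← inv_pow]
      simp only [sub_zero, abs_one, mul_one]
      gcongr
      linarith
  have hgd' : ∀ w ∈ W, ∀ x y, gpot ψ w x ≤ gpot ψ w y + H := by
    intro w hw x y
    refine (hgd w x y).trans ?_
    have := (hW' w hw).1
    rw [hH]; gcongr
  set K : ℕ := ⌈Real.exp (2 * D) / c⌉₊ with hK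
  have hKle : Real.exp (2 * D) / c ≤ K := Nat.le_ceil _
  have hKD : Real.exp D ≤ K := by
    refine le_trans ?_ hKle
    rw [le_div_iff₀ hc0]
    calc Real.exp D * c ≤ Real.exp D * 1 := by gcongr
      _ ≤ Real.exp (2 * D) := by rw [mul_one]; gcongr; linarith
  have hcY : ∀ w ∈ W, ∀ x y, |π x - π y| ≤ K * 2 ^ n * |π (cat w x) - π (cat w y)| := by
    intro w hw x y
    rw [coding_cat Φ π hπ, coding_cat Φ π hπ]
    have hx := coding_mem Φ π hπ x
    have hy := coding_mem Φ π hπ y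
    set d := |wordMap Φ w (π x) - wordMap Φ w (π y)| with hd
    have b1 := hdist w 1 i1 0 i0 _ hx _ hy
    have b2 := (hW' w hw).2.2
    have b3 := hlen w hw
    simp only [sub_zero, abs_one, mul_one] at b1
    rw [← hd] at b1
    have b4 : s * c * |π x - π y| ≤ Real.exp (2 * D) * d := by
      calc s * c * |π x - π y|
          ≤ (Real.exp (ε' * w.length + C₁) * |wordMap Φ w 1 - wordMap Φ w 0|) * |π x - π y| := by
            gcongr
        _ = Real.exp (ε' * w.length + C₁) * (|wordMap Φ w 1 - wordMap Φ w 0| * |π x - π y|) := by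
            ring
        _ ≤ Real.exp D * (Real.exp D * d) := by
            refine mul_le_mul b3 (b1.trans ?_) (by positivity) (by positivity)
            gcongr
        _ = _ := by rw [two_mul, Real.exp_add]; ring
    calc |π x - π y| = (2 ^ n / c) * (s * c * |π x - π y|) := by
          rw [hs]; field_simp
      _ ≤ (2 ^ n / c) * (Real.exp (2 * D) * d) := by gcongr
      _ = (Real.exp (2 * D) / c) * 2 ^ n * d := by ring
      _ ≤ _ := by gcongr
  have hYY : ∀ w ∈ W, ∀ x y, 2 ^ n * |π (cat w x) - π (cat w y)| ≤ K := by
    intro w hw x y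
    rw [coding_cat Φ π hπ, coding_cat Φ π hπ]
    have hx := coding_mem Φ π hπ x
    have hy := coding_mem Φ π hπ y
    have b1 := hdist w _ hx _ hy 1 i1 0 i0
    simp only [sub_zero, abs_one, mul_one] at b1
    calc 2 ^ n * |wordMap Φ w (π x) - wordMap Φ w (π y)|
        ≤ 2 ^ n * (Real.exp D * (s * 1)) := by
          gcongr
          refine b1.trans ?_
          gcongr
          · exact Real.exp_le_exp.1 (hlen w hw)
          · exact hsmall w hw
          · exact abs1 _ hx _ hy
      _ = Real.exp D := by rw [hs]; field_simp
      _ ≤ K := hKD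
  set cc : ℝ≥0∞ := ENNReal.ofReal (Real.exp H) with hcc
  have hYm : ∀ w : Word N, Measurable fun x => π (cat w x) := fun w =>
    (hπc.comp (continuous_cat w)).measurable
  have hdecomp : ∀ B : Set ℝ, MeasurableSet B → ν (π ⁻¹' B) =
      ∑ i : Fin W.length, ∫⁻ x, wt ψ (W.get i) x *
        ((fun x => π (cat (W.get i) x)) ⁻¹' B).indicator 1 x ∂ν := by
    intro B hB
    have hm : MeasurableSet (π ⁻¹' B) := hπc.measurable hB
    have h1 := hW ((π ⁻¹' B).indicator 1) (measurable_one.indicator hm)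
    rw [lintegral_indicator_one hm] at h1
    rw [h1, ← Fin.sum_univ_fun_getElem]
    rfl
  have hind : ∀ (w : Word N) (B : Set ℝ), MeasurableSet B →
      mass ψ ν w * ν ((fun x => π (cat w x)) ⁻¹' B) =
      ∫⁻ x, mass ψ ν w * ((fun x => π (cat w x)) ⁻¹' B).indicator 1 x ∂ν := by
    intro w B hB
    rw [lintegral_const_mul _ (measurable_one.indicator (hYm w hB)),
      lintegral_indicator_one (hYm w hB)]
  have key := core ν π hπc.measurable (fun (i : Fin W.length) x => π (cat (W.get i) x))
    (fun i => hYm _) (fun i => mass ψ ν (W.get i)) (fun i => by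
      have x₀ : SeqSp N := (ν.nonempty_of_neZero).some
      refine ((mass_le_wt ψ ν _ (hgd' _ (List.get_mem W i)) x₀).trans_lt ?_).ne
      exact ENNReal.mul_lt_top ENNReal.ofReal_lt_top ENNReal.ofReal_lt_top) cc n m K
    (fun B hB => by
      rw [hdecomp B hB, Finset.mul_sum]
      refine Finset.sum_le_sum fun i _ => ?_
      rw [hind _ B hB, ← lintegral_const_mul' _ _ ENNReal.ofReal_ne_top]
      refine lintegral_mono fun x => ?_
      rw [← mul_assoc]
      exact mul_le_mul' (mass_le_wt ψ ν _ (hgd' _ (List.get_mem W i)) x) le_rfl)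
    (fun B hB => by
      rw [hdecomp B hB, Finset.mul_sum]
      refine Finset.sum_le_sum fun i _ => ?_
      rw [hind _ B hB, ← lintegral_const_mul' _ _ ENNReal.ofReal_ne_top]
      refine lintegral_mono fun x => ?_
      rw [← mul_assoc]
      exact mul_le_mul' (wt_le_mass ψ ν _ (hgd' _ (List.get_mem W i)) x) le_rfl)
    (fun i => hcY _ (List.get_mem W i)) (fun i => hYY _ (List.get_mem W i)) hq0 hq1
  refine key.trans ?_
  gcongr
  -- numerical bound
  have e1 : cc ^ q ≤ ENNReal.ofReal (Real.exp H) := by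
    calc cc ^ q ≤ cc ^ (1:ℝ) := ENNReal.rpow_le_rpow_of_exponent_le
          (by rw [hcc]; exact ENNReal.one_le_ofReal.2 (Real.one_le_exp hH0)) hq1
      _ = _ := ENNReal.rpow_one _
  have e2 : (2 * K + 1 : ℝ) ≤ 5 / c * Real.exp (2 * D) := by
    have : (K:ℝ) < Real.exp (2 * D) / c + 1 := Nat.ceil_lt_add_one (by positivity)
    have h1 : 1 ≤ Real.exp (2 * D) / c := by
      rw [le_div_iff₀ hc0]
      have := Real.one_le_exp (by linarith : 0 ≤ 2 * D)
      linarith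
    have h2 : 5 / c * Real.exp (2 * D) = 5 * (Real.exp (2 * D) / c) := by ring
    rw [h2]; linarith
  have e3 : (2 * K + 1 : ℝ≥0∞) = ENNReal.ofReal (2 * K + 1 : ℝ) := by
    rw [ENNReal.ofReal_add (by positivity) zero_le_one, ENNReal.ofReal_mul (by norm_num)]
    simp
  rw [e3]
  calc ENNReal.ofReal (2 * K + 1 : ℝ) ^ 3 * (cc ^ q) ^ 2
      ≤ ENNReal.ofReal (5 / c * Real.exp (2 * D)) ^ 3 * ENNReal.ofReal (Real.exp H) ^ 2 := by
        gcongr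
    _ = ENNReal.ofReal ((5 / c * Real.exp (2 * D)) ^ 3 * (Real.exp H) ^ 2) := by
        rw [← ENNReal.ofReal_pow (by positivity), ← ENNReal.ofReal_pow (by positivity),
          ← ENNReal.ofReal_mul (by positivity)]
    _ ≤ _ := by
        refine ENNReal.ofReal_le_ofReal ?_
        have hc5 : 0 < 5 / c := by positivity
        have : (5 / c * Real.exp (2 * D)) ^ 3 * (Real.exp H) ^ 2 =
            Real.exp (6 * D + 2 * H + 3 * Real.log (5 / c)) := by
          rw [Real.exp_add (6 * D + 2 * H), Real.exp_add (6 * D), show 3 * Real.log (5 / c) = ((3:ℕ):ℝ) * Real.log (5 / c) by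
            norm_num, Real.exp_nat_mul, Real.exp_log hc5, mul_pow, ← Real.exp_nat_mul,
            ← Real.exp_nat_mul]
          push_cast
          ring_nf
        rw [this]
        refine Real.exp_le_exp.2 ?_
        have hn : (0:ℝ) ≤ n := Nat.cast_nonneg n
        have := mul_le_mul_of_nonneg_right hε'A hn
        rw [hD, hH]; push_cast
        nlinarith

end LqAux


/-- **Proposition 5.10.**  For a weak `ψ`-Gibbs measure `ρ` with respect to a non-trivial
`C¹`-IFS (with or without overlaps), the `L^q`-spectrum `β_ρ(q)` exists as a limit for
every `q ∈ (0,1]`. -/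
theorem Lq_spectrum_exists_as_limit
    {N : ℕ} (Φ : C1IFS N) (hΦ : Φ.NontrivialIFS)
    (π : SeqSp N → ℝ) (hπ : IsCoding Φ π) (hπc : Continuous π)
    (ψ : SeqSp N → ℝ) (hψc : Continuous ψ) (hψn : Normalized ψ)
    (ν : Measure (SeqSp N)) [IsProbabilityMeasure ν] (hν : IsTransferFixed ψ ν)
    (ρ : Measure ℝ) (hρ : ρ = Measure.map π ν)
    (q : ℝ) (hq : q ∈ Set.Ioc (0:ℝ) 1) :
    ∃ L : ℝ, Filter.Tendsto (fun n => Lq.betaN ρ n q) Filter.atTop (nhds L) := by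

  subst hρ
  haveI : IsProbabilityMeasure (ν.map π) :=
    Measure.isProbabilityMeasure_map hπc.measurable.aemeasurable
  refine LqAux.exists_limit (ν.map π) ?_ hq.1 hq.2 fun ε hε =>
    LqAux.supermult Φ π hπ hπc ψ hψc ν hν hq.1 hq.2 hε
  rw [Measure.map_apply hπc.measurable measurableSet_Icc.compl]
  convert measure_empty (μ := ν)
  ext x
  simpa using LqAux.coding_mem Φ π hπ x
end
end

section
/- Let ρ be a weak ψ-Gibbs measure with respect to a non-trivial C¹-IFS (with or without overlaps). Then the upper and lower Minkowski (box-counting) dimensions of supp(ρ) coincide, i.e. the Minkowski dimension of the self-conformal set supp(ρ) = K exists; in particular, the L^q-spectrum β_ρ exists as a limit on the whole closed interval [0,1]. -/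
open MeasureTheory Set Filter Topology
open scoped ENNReal NNReal Classical

noncomputable section

open Symb

/-- Number of `δ`-mesh intervals meeting a set `A ⊆ ℝ`. -/
def meshCount (A : Set ℝ) (δ : ℝ) : ℕ :=
  Set.ncard {k : ℤ | (Set.Ioc ((k : ℝ) * δ) (((k : ℝ) + 1) * δ) ∩ A).Nonempty}

namespace MD
open Symb

def g (q : ℝ) (t : ℝ≥0∞) : ℝ≥0∞ := if t = 0 then 0 else t ^ q

theorem g_zero (q : ℝ) : g q 0 = 0 := by simp [g]

theorem g_pos {q : ℝ} (hq : 0 < q) (t : ℝ≥0∞) : g q t = t ^ q := by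
  unfold g; split_ifs with h
  · simp [h, hq]
  · rfl

theorem g_mono {q : ℝ} (hq : 0 ≤ q) {s t : ℝ≥0∞} (h : s ≤ t) : g q s ≤ g q t := by
  unfold g; split_ifs with h1 h2 h2
  · exact le_rfl
  · exact zero_le
  · exact absurd (le_antisymm (h2 ▸ h) zero_le) h1
  · exact ENNReal.rpow_le_rpow h hq

theorem g_zero_q (t : ℝ≥0∞) : g 0 t = if t = 0 then 0 else 1 := by simp [g]

theorem g_add_le {q : ℝ} (hq : 0 ≤ q) (hq1 : q ≤ 1) (s t : ℝ≥0∞) :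
    g q (s + t) ≤ g q s + g q t := by
  rcases hq.eq_or_lt with rfl | h
  · simp only [g_zero_q, add_eq_zero]
    by_cases hs : s = 0 <;> by_cases ht : t = 0 <;> simp [hs, ht]
  · simp only [g_pos h]; exact ENNReal.rpow_add_le_add_rpow _ _ hq hq1

theorem g_sum_le {q : ℝ} (hq : 0 ≤ q) (hq1 : q ≤ 1) {ι : Type*} (F : Finset ι) (a : ι → ℝ≥0∞) :
    g q (∑ i ∈ F, a i) ≤ ∑ i ∈ F, g q (a i) := by
  induction F using Finset.induction_on with
  | empty => simp [g_zero]
  | insert i F hi ih =>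
    rw [Finset.sum_insert hi, Finset.sum_insert hi]
    exact (g_add_le hq hq1 _ _).trans (by gcongr)

theorem g_tsum_le {q : ℝ} (hq : 0 ≤ q) (hq1 : q ≤ 1) {ι : Type*} (a : ι → ℝ≥0∞) :
    g q (∑' i, a i) ≤ ∑' i, g q (a i) := by
  rcases hq.eq_or_lt with rfl | h
  · rw [g_zero_q]
    split_ifs with h0
    · exact zero_le
    · rw [ENNReal.tsum_eq_zero] at h0
      push Not at h0
      obtain ⟨i, hi⟩ := h0
      refine le_trans ?_ (ENNReal.le_tsum i)
      simp [g_zero_q, hi]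
  · have h1 : Tendsto (fun F : Finset ι => ∑ i ∈ F, a i) atTop (𝓝 (∑' i, a i)) :=
      ENNReal.summable.hasSum
    have h2 := (ENNReal.continuous_rpow_const (y := q)).continuousAt.tendsto.comp h1
    rw [g_pos h]
    refine le_of_tendsto h2 (Eventually.of_forall fun F => ?_)
    have := g_sum_le hq hq1 F a
    rw [g_pos h] at this
    exact this.trans (ENNReal.sum_le_tsum F)

theorem g_mul {q : ℝ} (hq : 0 ≤ q) (s t : ℝ≥0∞) : g q (s * t) = g q s * g q t := by
  rcases hq.eq_or_lt with rfl | h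
  · simp only [g_zero_q, mul_eq_zero]
    by_cases hs : s = 0 <;> by_cases ht : t = 0 <;> simp [hs, ht]
  · simp only [g_pos h]; exact ENNReal.mul_rpow_of_nonneg _ _ hq

theorem le_g {q : ℝ} (hq1 : q ≤ 1) {c : ℝ≥0∞} (hc : c ≤ 1) : c ≤ g q c := by
  unfold g; split_ifs with h
  · exact h.le
  · calc c = c ^ (1:ℝ) := by simp
      _ ≤ c ^ q := ENNReal.rpow_le_rpow_of_exponent_ge hc hq1

theorem g_jensen {q : ℝ} (hq : 0 ≤ q) (hq1 : q ≤ 1) {ι : Type*} (F : Finset ι)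
    (w z : ι → ℝ≥0∞) (hw : ∑ i ∈ F, w i = 1) :
    ∑ i ∈ F, w i * g q (z i) ≤ g q (∑ i ∈ F, w i * z i) := by
  rcases hq.eq_or_lt with rfl | h
  · by_cases h0 : ∑ i ∈ F, w i * z i = 0
    · rw [Finset.sum_eq_zero_iff] at h0
      rw [Finset.sum_eq_zero]
      · exact zero_le
      · intro i hi
        rcases mul_eq_zero.1 (h0 i hi) with h | h <;> simp [h, g_zero]
    · rw [g_zero_q, if_neg h0, ← hw]
      refine Finset.sum_le_sum fun i _ => ?_
      rw [g_zero_q]; split_ifs <;> simp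
  · simp only [g_pos h]
    have := ENNReal.rpow_arith_mean_le_arith_mean_rpow F w (fun i => z i ^ q) hw
      (p := 1 / q) (by rw [le_div_iff₀ h]; linarith)
    have h3 := ENNReal.rpow_le_rpow this hq
    rw [← ENNReal.rpow_mul, one_div, inv_mul_cancel₀ h.ne', ENNReal.rpow_one] at h3
    refine h3.trans (le_of_eq ?_)
    congr 1
    refine Finset.sum_congr rfl fun i _ => ?_
    rw [← ENNReal.rpow_mul, mul_inv_cancel₀ h.ne', ENNReal.rpow_one]

theorem g_jensen' {q : ℝ} (hq : 0 ≤ q) (hq1 : q ≤ 1) {ι : Type*} (F : Finset ι)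
    (w z : ι → ℝ≥0∞) (Q : ℝ≥0∞) (hQ : ∑ i ∈ F, w i = Q) (hQ0 : Q ≠ 0) (hQt : Q ≠ ⊤) :
    g q Q * ∑ i ∈ F, (w i / Q) * g q (z i) ≤ g q (∑ i ∈ F, w i * z i) := by
  have h1 : ∑ i ∈ F, w i / Q = 1 := by
    simp only [div_eq_mul_inv]
    rw [← Finset.sum_mul, hQ, ENNReal.mul_inv_cancel hQ0 hQt]
  have h2 : ∑ i ∈ F, w i * z i = Q * ∑ i ∈ F, (w i / Q) * z i := by
    rw [Finset.mul_sum]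
    refine Finset.sum_congr rfl fun i _ => ?_
    rw [← mul_assoc, ENNReal.mul_div_cancel hQ0 hQt]
  rw [h2, g_mul hq]
  gcongr
  exact g_jensen hq hq1 F _ z h1

/-- Fekete-type lemma -/
theorem fekete (a : ℕ → ℝ) (B : ℝ) (h0 : ∀ n, 0 ≤ a n) (hB : ∀ n : ℕ, a n ≤ B * (n + 1))
    (h : ∀ η > 0, ∃ A : ℝ, ∀ n m : ℕ, a n + a m ≤ a (n + m) + η * n + A) :
    ∃ L, Tendsto (fun n : ℕ => a n / n) atTop (𝓝 L) := by
  have hB0 : 0 ≤ B := by have := hB 0; have := h0 0; norm_num at *; linarith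
  have hbd : ∀ n : ℕ, a n / n ≤ 2 * B := by
    intro n
    rcases Nat.eq_zero_or_pos n with rfl | hn
    · simp; positivity
    · have : (1:ℝ) ≤ n := by exact_mod_cast hn
      rw [div_le_iff₀ (by positivity)]
      nlinarith [hB n]
  have hnn : ∀ n : ℕ, 0 ≤ a n / n := fun n => div_nonneg (h0 n) (Nat.cast_nonneg n)
  have b1 : IsBoundedUnder (· ≤ ·) atTop (fun n : ℕ => a n / n) := isBoundedUnder_of ⟨_, hbd⟩
  have b2 : IsBoundedUnder (· ≥ ·) atTop (fun n : ℕ => a n / n) := isBoundedUnder_of ⟨0, hnn⟩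
  refine ⟨limsup (fun n : ℕ => a n / n) atTop, tendsto_of_le_liminf_of_limsup_le ?_ le_rfl b1 b2⟩
  set L := limsup (fun n : ℕ => a n / n) atTop with hL
  refine le_of_forall_pos_le_add fun ε hε => ?_
  obtain ⟨A, hA⟩ := h (ε / 8) (by positivity)
  -- choose n large
  have hfr : ∃ᶠ n : ℕ in atTop, L - ε / 4 < a n / n :=
    frequently_lt_of_lt_limsup (b2.isCoboundedUnder_le) (by linarith)
  have hev : ∀ᶠ n : ℕ in atTop, 0 < n ∧ |A| / (ε / 8) ≤ n :=
    (eventually_gt_atTop 0).and ((tendsto_natCast_atTop_atTop (R := ℝ)).eventually_ge_atTop _)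
  obtain ⟨n, hn1, hn0, hn2⟩ := (hfr.and_eventually hev).exists
  have hn0' : (0:ℝ) < n := by exact_mod_cast hn0
  rw [lt_div_iff₀ hn0'] at hn1
  rw [div_le_iff₀ (by positivity)] at hn2
  set s := a n - ε / 8 * n - A with hs
  have hs1 : (L - ε / 2) * n ≤ s := by
    have := le_abs_self A
    nlinarith
  have hk : ∀ k r : ℕ, k * s ≤ a (k * n + r) := by
    intro k r
    induction k with
    | zero => simpa using h0 _
    | succ k ih =>
      have := hA n (k * n + r)
      have e : (k + 1) * n + r = n + (k * n + r) := by ring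
      rw [e]; push_cast; linarith
  have hlow : ∀ᶠ m : ℕ in atTop, L - ε ≤ a m / m := by
    have hev2 : ∀ᶠ m : ℕ in atTop, 0 < m ∧ |L - ε/2| * n / (ε / 2) ≤ m :=
      (eventually_gt_atTop 0).and ((tendsto_natCast_atTop_atTop (R := ℝ)).eventually_ge_atTop _)
    filter_upwards [hev2] with m ⟨hm0, hm⟩
    have hm0' : (0:ℝ) < m := by exact_mod_cast hm0
    rw [div_le_iff₀ (by positivity)] at hm
    rw [le_div_iff₀ hm0']
    have h1 := hk (m / n) (m % n)
    rw [Nat.div_add_mod'] at h1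
    have h2 : ((m / n : ℕ) : ℝ) * n + (m % n : ℕ) = m := by exact_mod_cast Nat.div_add_mod' m n
    have h3 : ((m % n : ℕ) : ℝ) ≤ n := by exact_mod_cast (Nat.mod_lt m hn0).le
    have h4 : (0:ℝ) ≤ (m % n : ℕ) := Nat.cast_nonneg _
    have h5 : ((m / n : ℕ) : ℝ) * ((L - ε / 2) * n) ≤ a m :=
      le_trans (by gcongr) h1
    have h6 : ((m / n : ℕ) : ℝ) * ((L - ε / 2) * n) = (L - ε/2) * m - (L - ε/2) * (m % n : ℕ) := by
      rw [← h2]; ring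
    have h7 : (L - ε/2) * (m % n : ℕ) ≤ |L - ε/2| * n := by
      calc _ ≤ |L - ε/2| * (m % n : ℕ) := by gcongr; exact le_abs_self _
        _ ≤ _ := by gcongr
    nlinarith
  have := le_liminf_of_le (b1.isCoboundedUnder_ge) hlow
  linarith

end MD

namespace MD
open Symb
variable {N : ℕ}

theorem wordMap_cons (Φ : C1IFS N) (i : Fin N) (w : Word N) (x : ℝ) :
    wordMap Φ (i :: w) x = Φ.T i (wordMap Φ w x) := rfl

theorem wordDeriv_cons (Φ : C1IFS N) (i : Fin N) (w : Word N) (x : ℝ) :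
    wordDeriv Φ (i :: w) x = Φ.T' i (wordMap Φ w x) * wordDeriv Φ w x := rfl

theorem wordMap_append (Φ : C1IFS N) (u v : Word N) (x : ℝ) :
    wordMap Φ (u ++ v) x = wordMap Φ u (wordMap Φ v x) := by
  induction u with
  | nil => rfl
  | cons i u ih => rw [List.cons_append, wordMap_cons, ih, wordMap_cons]

theorem wordMap_mem (Φ : C1IFS N) (w : Word N) {x : ℝ} (hx : x ∈ Icc (0:ℝ) 1) :
    wordMap Φ w x ∈ Icc (0:ℝ) 1 := by
  induction w with
  | nil => exact hx
  | cons i w ih => exact Φ.maps_into i ih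

theorem wordMap_deriv (Φ : C1IFS N) (w : Word N) {x : ℝ} (hx : x ∈ Icc (0:ℝ) 1) :
    HasDerivWithinAt (wordMap Φ w) (wordDeriv Φ w x) (Icc 0 1) x := by
  induction w with
  | nil => exact hasDerivWithinAt_id _ _
  | cons i w ih =>
    exact HasDerivWithinAt.comp x (Φ.hderiv i _ (wordMap_mem Φ w hx)) ih
      (fun y hy => wordMap_mem Φ w hy)

theorem wordMap_mvt (Φ : C1IFS N) (w : Word N) {x y : ℝ} (hx : x ∈ Icc (0:ℝ) 1)
    (hy : y ∈ Icc (0:ℝ) 1) :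
    ∃ ξ ∈ Icc (0:ℝ) 1, |wordMap Φ w x - wordMap Φ w y| = |wordDeriv Φ w ξ| * |x - y| := by
  wlog hxy : x < y generalizing x y
  · rcases (not_lt.1 hxy).eq_or_lt with h | h
    · exact ⟨x, hx, by simp [h]⟩
    · obtain ⟨ξ, h1, h2⟩ := this hy hx h
      exact ⟨ξ, h1, by rw [abs_sub_comm, h2, abs_sub_comm x y]⟩
  have hsub : Icc x y ⊆ Icc (0:ℝ) 1 := Icc_subset_Icc hx.1 hy.2
  obtain ⟨ξ, hξ, h⟩ := exists_hasDerivAt_eq_slope (wordMap Φ w) (wordDeriv Φ w) hxy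
    (fun z hz => ((wordMap_deriv Φ w (hsub hz)).continuousWithinAt).mono hsub)
    (fun z hz => (wordMap_deriv Φ w (hsub (Ioo_subset_Icc_self hz))).hasDerivAt
      (Icc_mem_nhds (lt_of_le_of_lt hx.1 hz.1) (lt_of_lt_of_le hz.2 hy.2)))
  refine ⟨ξ, hsub (Ioo_subset_Icc_self hξ), ?_⟩
  have h0 : y - x ≠ 0 := by linarith
  rw [h, abs_div, abs_sub_comm x y, div_mul_cancel₀ _ (by simpa using h0), abs_sub_comm]

/-- uniform bounds -/
structure Bds (Φ : C1IFS N) (r c : ℝ) : Prop where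
  r0 : 0 < r
  r1 : r < 1
  c0 : 0 < c
  c1 : c ≤ 1
  ub : ∀ i, ∀ x ∈ Icc (0:ℝ) 1, |Φ.T' i x| ≤ r
  lb : ∀ i, ∀ x ∈ Icc (0:ℝ) 1, c ≤ |Φ.T' i x|

theorem exists_bds (Φ : C1IFS N) (hN : 2 ≤ N) : ∃ r c, Bds Φ r c := by
  have : Nonempty (Fin N) := ⟨⟨0, by omega⟩⟩
  choose r hr1 hr using Φ.contracting
  choose c hc0 hc using Φ.deriv_bdd_below
  obtain ⟨i, hi⟩ := Finite.exists_max r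
  obtain ⟨j, hj⟩ := Finite.exists_min c
  have z : (0:ℝ) ∈ Icc (0:ℝ) 1 := by simp
  exact ⟨r i, c j, lt_of_lt_of_le (hc0 i) ((hc i 0 z).trans (hr i 0 z)), hr1 i, hc0 j,
    ((hc j 0 z).trans (hr j 0 z)).trans (hr1 j).le,
    fun k x hx => (hr k x hx).trans (hi k), fun k x hx => (hj k).trans (hc k x hx)⟩

theorem wordDeriv_le {Φ : C1IFS N} {r c : ℝ} (hb : Bds Φ r c) (w : Word N) {x : ℝ}
    (hx : x ∈ Icc (0:ℝ) 1) : |wordDeriv Φ w x| ≤ r ^ w.length := by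
  induction w with
  | nil => simp [wordDeriv]
  | cons i w ih =>
    rw [wordDeriv_cons, abs_mul, List.length_cons, pow_succ']
    exact mul_le_mul (hb.ub i _ (wordMap_mem Φ w hx)) ih (abs_nonneg _) hb.r0.le

theorem wordDeriv_pos {Φ : C1IFS N} {r c : ℝ} (hb : Bds Φ r c) (w : Word N) {x : ℝ}
    (hx : x ∈ Icc (0:ℝ) 1) : 0 < |wordDeriv Φ w x| := by
  induction w with
  | nil => simp [wordDeriv]
  | cons i w ih =>
    rw [wordDeriv_cons, abs_mul]
    exact mul_pos (hb.c0.trans_le (hb.lb i _ (wordMap_mem Φ w hx))) ih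

theorem wordMap_contr {Φ : C1IFS N} {r c : ℝ} (hb : Bds Φ r c) (w : Word N) {x y : ℝ}
    (hx : x ∈ Icc (0:ℝ) 1) (hy : y ∈ Icc (0:ℝ) 1) :
    |wordMap Φ w x - wordMap Φ w y| ≤ r ^ w.length * |x - y| := by
  obtain ⟨ξ, h1, h2⟩ := wordMap_mvt Φ w hx hy
  rw [h2]
  gcongr
  exact wordDeriv_le hb w h1

theorem abs_sub_le_one' {x y : ℝ} (hx : x ∈ Icc (0:ℝ) 1) (hy : y ∈ Icc (0:ℝ) 1) :
    |x - y| ≤ 1 := by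
  rw [abs_le]; constructor <;> linarith [hx.1, hx.2, hy.1, hy.2]

/-- abstract distortion: products along words. -/
theorem prod_distort {X : Type*} (F : Word N → X → ℝ) (G : Word N → X → ℝ)
    (hF0 : ∀ x, F [] x = 1) (hFpos : ∀ w x, 0 ≤ F w x) (hG0 : ∀ w x, 0 ≤ G w x)
    (hF : ∀ i w x, F (i :: w) x = G (i :: w) x * F w x)
    (R : ℝ) (hR1 : 1 ≤ R) (hR : ∀ w x y, G w x ≤ R * G w y) (η : ℝ) (hη : 0 ≤ η) (k : ℕ)
    (hk : ∀ w, k ≤ w.length → ∀ x y, G w x ≤ Real.exp η * G w y) (w : Word N) (x y : X) :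
    F w x ≤ R ^ k * Real.exp (η * w.length) * F w y := by
  have key : ∀ w : Word N, ∀ x y,
      F w x ≤ R ^ (min w.length k) * Real.exp (η * w.length) * F w y := by
    intro w x y
    induction w with
    | nil => simp [hF0]
    | cons i w ih =>
      rw [hF, hF]
      have e : Real.exp (η * ((i :: w).length : ℕ)) = Real.exp η * Real.exp (η * w.length) := by
        rw [← Real.exp_add]; congr 1; push_cast [List.length_cons]; ring
      rw [e]
      have p0 : 0 ≤ R ^ (min w.length k) * Real.exp (η * w.length) := by positivity
      rcases le_or_gt k w.length with h | h
      · have h1 : min w.length k = k := min_eq_right h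
        have h2 : min (i :: w).length k = k := min_eq_right (by simp; omega)
        rw [h1] at ih; rw [h2]
        have h3 := hk (i :: w) (by simp; omega) x y
        calc _ ≤ (Real.exp η * G (i :: w) y) * (R ^ k * Real.exp (η * w.length) * F w y) :=
              mul_le_mul h3 ih (hFpos _ _) (mul_nonneg (Real.exp_pos _).le (hG0 _ _))
          _ = _ := by ring
      · have h1 : min w.length k = w.length := min_eq_left h.le
        have h2 : min (i :: w).length k = w.length + 1 := by simp; omega
        rw [h1] at ih; rw [h2]
        calc _ ≤ (R * G (i :: w) y) * (R ^ w.length * Real.exp (η * w.length) * F w y) :=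
              mul_le_mul (hR _ x y) ih (hFpos _ _) (mul_nonneg (by linarith) (hG0 _ _))
          _ = 1 * (R ^ (w.length + 1) * Real.exp (η * w.length) * (G (i :: w) y * F w y)) := by ring
          _ ≤ Real.exp η * (R ^ (w.length + 1) * Real.exp (η * w.length) * (G (i :: w) y * F w y)) := by
              gcongr
              · have := hG0 (i :: w) y; have := hFpos w y; positivity
              · exact Real.one_le_exp hη
          _ = _ := by ring
  refine (key w x y).trans ?_
  gcongr
  · exact hFpos _ _
  · exact min_le_right _ _

theorem geom_distort {Φ : C1IFS N} {r c : ℝ} (hb : Bds Φ r c) {η : ℝ} (hη : 0 < η) :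
    ∃ A : ℝ, 1 ≤ A ∧ ∀ w : Word N, ∀ x ∈ Icc (0:ℝ) 1, ∀ y ∈ Icc (0:ℝ) 1,
      |wordDeriv Φ w x| ≤ A * Real.exp (η * w.length) * |wordDeriv Φ w y| := by
  -- uniform continuity
  have hu : ∀ i, ∃ δ > 0, ∀ x ∈ Icc (0:ℝ) 1, ∀ y ∈ Icc (0:ℝ) 1, |x - y| < δ →
      |Φ.T' i x| ≤ Real.exp η * |Φ.T' i y| := by
    intro i
    have h1 := isCompact_Icc.uniformContinuousOn_of_continuous (Φ.cont_deriv i)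
    rw [Metric.uniformContinuousOn_iff] at h1
    obtain ⟨δ, hδ, h2⟩ := h1 (c * η) (mul_pos hb.c0 hη)
    refine ⟨δ, hδ, fun x hx y hy hxy => ?_⟩
    have h3 := h2 x hx y hy hxy
    rw [Real.dist_eq] at h3
    have h4 : |Φ.T' i x| ≤ |Φ.T' i y| + |Φ.T' i x - Φ.T' i y| := by
      have := abs_sub_abs_le_abs_sub (Φ.T' i x) (Φ.T' i y); linarith
    have h5 := hb.lb i y hy
    have h6 := Real.add_one_le_exp η
    nlinarith [abs_nonneg (Φ.T' i y)]
  choose δ hδ0 hδ using hu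
  obtain ⟨δm, hδm0, hδm⟩ : ∃ d > 0, ∀ i, d ≤ δ i := by
    rcases isEmpty_or_nonempty (Fin N) with h | h
    · exact ⟨1, one_pos, fun i => h.elim i⟩
    · obtain ⟨j, hj⟩ := Finite.exists_min δ
      exact ⟨δ j, hδ0 j, hj⟩
  obtain ⟨k, hk⟩ := exists_pow_lt_of_lt_one hδm0 hb.r1
  have hcr : 1 ≤ max 1 (r / c) := le_max_left _ _
  refine ⟨(max 1 (r / c)) ^ (k + 1), one_le_pow₀ hcr, fun w x hx y hy => ?_⟩
  have := prod_distort (N := N) (X := Icc (0:ℝ) 1) (fun w x => |wordDeriv Φ w x|)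
    (fun w x => match w with
      | [] => 1
      | i :: w => |Φ.T' i (wordMap Φ w x)|)
    (by intro x; simp [wordDeriv]) (fun _ _ => abs_nonneg _)
    (by rintro (_ | ⟨i, w⟩) x <;> simp)
    (by intro i w x; simp only [wordDeriv_cons, abs_mul])
    (max 1 (r / c)) hcr
    (by
      rintro (_ | ⟨i, w⟩) x y
      · simp
      · have h1 := hb.ub i _ (wordMap_mem Φ w x.2)
        have h2 := hb.lb i _ (wordMap_mem Φ w y.2)
        calc _ ≤ r := h1
          _ = r / c * c := by rw [div_mul_cancel₀ _ hb.c0.ne']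
          _ ≤ _ := mul_le_mul (le_max_right _ _) h2 hb.c0.le (by positivity)) η hη.le (k + 1)
    (by
      rintro (_ | ⟨i, w⟩) hw x y
      · simp at hw
      · refine hδ i _ (wordMap_mem Φ w x.2) _ (wordMap_mem Φ w y.2) (lt_of_lt_of_le ?_ (hδm i))
        simp only [List.length_cons] at hw
        calc _ ≤ r ^ w.length * |(x:ℝ) - y| := wordMap_contr hb w x.2 y.2
          _ ≤ r ^ w.length * 1 := by
            gcongr
            · exact pow_nonneg hb.r0.le _
            · exact abs_sub_le_one' x.2 y.2
          _ ≤ r ^ k := by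
            rw [mul_one]; exact pow_le_pow_of_le_one hb.r0.le hb.r1.le (by omega)
          _ < _ := hk) w ⟨x, hx⟩ ⟨y, hy⟩
  exact this

/-- length of the word interval -/
def ell (Φ : C1IFS N) (w : Word N) : ℝ := |wordMap Φ w 1 - wordMap Φ w 0|

theorem ell_le {Φ : C1IFS N} {r c : ℝ} (hb : Bds Φ r c) (w : Word N) : ell Φ w ≤ r ^ w.length := by
  have := wordMap_contr hb w (x := 1) (y := 0) (by simp) (by simp)
  simpa [ell] using this

/-- the estimates for a stopped word -/
theorem stop_est {Φ : C1IFS N} {r c : ℝ} (hb : Bds Φ r c) {η A : ℝ} (hη : 0 ≤ η) (hA1 : 1 ≤ A)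
    (hA : ∀ w : Word N, ∀ x ∈ Icc (0:ℝ) 1, ∀ y ∈ Icc (0:ℝ) 1,
      |wordDeriv Φ w x| ≤ A * Real.exp (η * w.length) * |wordDeriv Φ w y|)
    (w : Word N) (i : Fin N) (s : ℝ) (hs : s ≤ ell Φ w) (x : ℝ) (hx : x ∈ Icc (0:ℝ) 1) :
    c * s ≤ A ^ 2 * Real.exp (2 * η * (w ++ [i]).length) * |wordDeriv Φ (w ++ [i]) x| := by
  have z0 : (0:ℝ) ∈ Icc (0:ℝ) 1 := by simp
  have z1 : (1:ℝ) ∈ Icc (0:ℝ) 1 := by simp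
  obtain ⟨ξ1, hξ1, e1⟩ := wordMap_mvt Φ w z1 z0
  have y0 := wordMap_mem Φ [i] z0
  have y1 := wordMap_mem Φ [i] z1
  obtain ⟨ξ2, hξ2, e2⟩ := wordMap_mvt Φ w y1 y0
  obtain ⟨ξ3, hξ3, e3⟩ := wordMap_mvt Φ [i] z1 z0
  obtain ⟨ξ4, hξ4, e4⟩ := wordMap_mvt Φ (w ++ [i]) z1 z0
  simp only [wordMap_append] at e4
  have e5 : |wordDeriv Φ [i] ξ3| = |Φ.T' i ξ3| := by simp [wordDeriv, wordMap]
  have h3 := hb.lb i ξ3 hξ3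
  have n1 : |(1:ℝ) - 0| = 1 := by simp
  rw [n1, mul_one] at e1 e3 e4
  rw [e3, e5] at e2
  have hm := hA w ξ1 hξ1 ξ2 hξ2
  have hm2 := hA (w ++ [i]) ξ4 hξ4 x hx
  have hs' : s ≤ |wordDeriv Φ w ξ1| := by rw [← e1]; exact hs
  have hlen : Real.exp (η * w.length) ≤ Real.exp (η * (w ++ [i]).length) := by
    apply Real.exp_le_exp.2; gcongr; simp
  set E := Real.exp (η * (w ++ [i]).length) with hE
  have hE2 : Real.exp (2 * η * (w ++ [i]).length) = E * E := by
    rw [hE, ← Real.exp_add]; congr 1; ring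
  rw [hE2]
  have hEp : 0 < E := Real.exp_pos _
  have hc := hb.c0
  have e6 : |wordDeriv Φ (w ++ [i]) ξ4| = |wordDeriv Φ w ξ2| * |Φ.T' i ξ3| := by rw [← e4, e2]
  calc c * s ≤ c * (A * E * |wordDeriv Φ w ξ2|) := by
        gcongr; exact hs'.trans (hm.trans (by gcongr))
    _ = A * E * (|wordDeriv Φ w ξ2| * c) := by ring
    _ ≤ A * E * (|wordDeriv Φ w ξ2| * |Φ.T' i ξ3|) := by gcongr
    _ = A * E * |wordDeriv Φ (w ++ [i]) ξ4| := by rw [e6]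
    _ ≤ A * E * (A * E * |wordDeriv Φ (w ++ [i]) x|) := by gcongr
    _ = _ := by ring

end MD

namespace MD
open Symb
variable {N : ℕ}

/-- prefix of length m -/
def pre (x : SeqSp N) (m : ℕ) : Word N := List.ofFn fun i : Fin m => x i

theorem pre_length (x : SeqSp N) (m : ℕ) : (pre x m).length = m := by simp [pre]

theorem cat_nil (x : SeqSp N) : cat [] x = x := by
  funext k; simp [cat]

theorem cat_cons_zero (i : Fin N) (w : Word N) (x : SeqSp N) : cat (i :: w) x 0 = i := by
  simp [cat]

theorem cat_cons_succ (i : Fin N) (w : Word N) (x : SeqSp N) (k : ℕ) :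
    cat (i :: w) x (k + 1) = cat w x k := by
  simp [cat]

theorem shift_cat_cons (i : Fin N) (w : Word N) (x : SeqSp N) :
    shift (cat (i :: w) x) = cat w x := by
  funext k; exact cat_cons_succ i w x k

theorem cat_cons (i : Fin N) (w : Word N) (x : SeqSp N) :
    cat (i :: w) x = cat [i] (cat w x) := by
  funext k
  cases k with
  | zero => rw [cat_cons_zero, cat_cons_zero]
  | succ k => rw [cat_cons_succ, cat_cons_succ, cat_nil]

theorem mem_cyl_cons (i : Fin N) (w : Word N) (x : SeqSp N) :
    x ∈ Symb.cylinder (i :: w) ↔ x 0 = i ∧ shift x ∈ Symb.cylinder w := by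
  constructor
  · intro h
    refine ⟨h ⟨0, by simp⟩, fun k => ?_⟩
    have := h ⟨k + 1, by simp⟩
    simpa [shift] using this
  · rintro ⟨h0, h⟩ ⟨k, hk⟩
    cases k with
    | zero => simpa using h0
    | succ k =>
      have := h ⟨k, by simpa using hk⟩
      simpa [shift] using this

theorem mem_cyl_cat (i j : Fin N) (w : Word N) (x : SeqSp N) :
    cat [j] x ∈ Symb.cylinder (i :: w) ↔ j = i ∧ x ∈ Symb.cylinder w := by
  rw [mem_cyl_cons, cat_cons_zero, shift_cat_cons, cat_nil]

theorem pre_succ (x : SeqSp N) (m : ℕ) : pre x (m + 1) = x 0 :: pre (shift x) m := by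
  simp [pre, List.ofFn_succ, shift]

theorem pre_succ_last (x : SeqSp N) (m : ℕ) : pre x (m + 1) = pre x m ++ [x m] := by
  unfold pre
  rw [List.ofFn_succ_last]
  simp

theorem mem_cyl_iff (w : Word N) (x : SeqSp N) : x ∈ Symb.cylinder w ↔ pre x w.length = w := by
  induction w generalizing x with
  | nil => simp [pre, Symb.cylinder]
  | cons i w ih =>
    rw [mem_cyl_cons, List.length_cons, pre_succ, ih, List.cons.injEq]

theorem cat_mem_cyl (w : Word N) (x : SeqSp N) : cat w x ∈ Symb.cylinder w := by
  induction w with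
  | nil => simp [Symb.cylinder]
  | cons i w ih => rw [cat_cons, mem_cyl_cat]; exact ⟨rfl, ih⟩

theorem eq_cat_of_mem (w : Word N) (x : SeqSp N) (h : x ∈ Symb.cylinder w) : ∃ y, x = cat w y := by
  induction w generalizing x with
  | nil => exact ⟨x, (cat_nil x).symm⟩
  | cons i w ih =>
    rw [mem_cyl_cons] at h
    obtain ⟨y, hy⟩ := ih _ h.2
    refine ⟨y, ?_⟩
    funext k
    cases k with
    | zero => rw [cat_cons_zero, h.1]
    | succ k => rw [cat_cons_succ, ← hy]; rfl

theorem continuous_cat (w : Word N) : Continuous (cat w : SeqSp N → SeqSp N) := by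
  refine continuous_pi fun k => ?_
  unfold cat
  split_ifs with h
  · exact continuous_const
  · exact continuous_apply _

theorem isOpen_cyl (w : Word N) : IsOpen (Symb.cylinder w : Set (SeqSp N)) := by
  have : (Symb.cylinder w : Set (SeqSp N)) = ⋂ i : Fin w.length, (fun x : SeqSp N => x i) ⁻¹' {w.get i} := by
    ext x; simp [Symb.cylinder]
  rw [this]
  exact isOpen_iInter_of_finite fun i => (isOpen_discrete _).preimage (continuous_apply _)

theorem cyl_basis (U : Set (SeqSp N)) (hU : IsOpen U) (x : SeqSp N) (hx : x ∈ U) :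
    ∃ m, Symb.cylinder (pre x m) ⊆ U := by
  rw [isOpen_pi_iff] at hU
  obtain ⟨I, u, h1, h2⟩ := hU x hx
  obtain ⟨m, hm⟩ := I.exists_nat_subset_range
  refine ⟨m, fun y hy => h2 fun k hk => ?_⟩
  have hkm : k < m := by simpa using hm hk
  have := hy ⟨k, by rw [pre_length]; exact hkm⟩
  simp only [pre, List.get_ofFn] at this
  rw [show y k = x k from by simpa using this]
  exact (h1 k hk).2

theorem one_step (ψ : SeqSp N → ℝ) (hψc : Continuous ψ)
    (ν : Measure (SeqSp N)) [IsProbabilityMeasure ν] (hν : IsTransferFixed ψ ν)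
    (f : SeqSp N → ℝ≥0∞) (hf : Measurable f) :
    ∫⁻ x, f x ∂ν = ∑ j : Fin N, ∫⁻ x, ENNReal.ofReal (Real.exp (ψ (cat [j] x))) * f (cat [j] x) ∂ν := by
  have hc : ∀ j : Fin N, Continuous fun x => Real.exp (ψ (cat [j] x)) := fun j =>
    Real.continuous_exp.comp (hψc.comp (continuous_cat _))
  have hm : ∀ j : Fin N, Measurable fun x => ENNReal.ofReal (Real.exp (ψ (cat [j] x))) := fun j =>
    (hc j).measurable.ennreal_ofReal
  set μj : Fin N → Measure (SeqSp N) := fun j =>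
    (ν.withDensity fun x => ENNReal.ofReal (Real.exp (ψ (cat [j] x)))).map (cat [j]) with hμj
  have hIntg : ∀ (j : Fin N) (f : SeqSp N → ℝ), Continuous f →
      Integrable (fun x => Real.exp (ψ (cat [j] x)) * f (cat [j] x)) ν := by
    intro j f hf
    have hcc : Continuous (fun x => Real.exp (ψ (cat [j] x)) * f (cat [j] x)) :=
      (hc j).mul (hf.comp (continuous_cat _))
    exact (BoundedContinuousFunction.mkOfCompact ⟨_, hcc⟩).integrable ν
  have hfin : ∀ j, IsFiniteMeasure (ν.withDensity fun x => ENNReal.ofReal (Real.exp (ψ (cat [j] x)))) := by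
    intro j
    have := hIntg j (fun _ => 1) continuous_const
    simp only [mul_one] at this
    exact isFiniteMeasure_withDensity_ofReal this.2
  have hfin2 : ∀ j, IsFiniteMeasure (μj j) := fun j => by
    have := hfin j
    rw [hμj]; infer_instance
  have heq : ν = ∑ j, μj j := by
    have hfs : IsFiniteMeasure (∑ j, μj j) := by infer_instance
    refine ext_of_forall_integral_eq_of_IsFiniteMeasure fun f => ?_
    rw [integral_finsetSum_measure (fun j _ => f.integrable _), ← hν f f.continuous]
    unfold transfer
    rw [integral_finsetSum _ (fun j _ => hIntg j f f.continuous)]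
    refine Finset.sum_congr rfl fun j _ => ?_
    rw [hμj]
    simp only
    rw [integral_map (continuous_cat _).measurable.aemeasurable
      f.continuous.measurable.aestronglyMeasurable]
    rw [integral_withDensity_eq_integral_toReal_smul (hm j) (by simp)]
    refine integral_congr_ae (Eventually.of_forall fun x => ?_)
    simp [ENNReal.toReal_ofReal (Real.exp_pos _).le]
  conv_lhs => rw [heq]
  rw [lintegral_finsetSum_measure]
  refine Finset.sum_congr rfl fun j _ => ?_
  rw [hμj]
  simp only
  rw [lintegral_map hf (continuous_cat _).measurable,
    lintegral_withDensity_eq_lintegral_mul ν (hm j) (g := fun x => f (cat [j] x))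
      (hf.comp (continuous_cat _).measurable)]
  rfl

/-- `exp S_w ψ (w x)` -/
def Gw (ψ : SeqSp N → ℝ) : Word N → SeqSp N → ℝ
  | [] => fun _ => 1
  | i :: w => fun x => Real.exp (ψ (cat (i :: w) x)) * Gw ψ w x

theorem Gw_pos (ψ : SeqSp N → ℝ) (w : Word N) (x : SeqSp N) : 0 < Gw ψ w x := by
  induction w with
  | nil => simp [Gw]
  | cons i w ih => exact mul_pos (Real.exp_pos _) ih

theorem Gw_cont (ψ : SeqSp N → ℝ) (hψc : Continuous ψ) (w : Word N) : Continuous (Gw ψ w) := by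
  induction w with
  | nil => exact continuous_const
  | cons i w ih => exact (Real.continuous_exp.comp (hψc.comp (continuous_cat _))).mul ih

theorem cyl_formula (ψ : SeqSp N → ℝ) (hψc : Continuous ψ)
    (ν : Measure (SeqSp N)) [IsProbabilityMeasure ν] (hν : IsTransferFixed ψ ν)
    (w : Word N) (f : SeqSp N → ℝ≥0∞) (hf : Measurable f) :
    ∫⁻ x, (Symb.cylinder w).indicator f x ∂ν = ∫⁻ x, ENNReal.ofReal (Gw ψ w x) * f (cat w x) ∂ν := by
  induction w generalizing f with
  | nil =>
    have : (Symb.cylinder ([] : Word N)) = univ := by ext x; simp [Symb.cylinder]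
    simp [this, Gw, cat_nil]
  | cons i w ih =>
    rw [one_step ψ hψc ν hν _ (hf.indicator (isOpen_cyl _).measurableSet)]
    rw [Finset.sum_eq_single i]
    · have e : ∀ x, ENNReal.ofReal (Real.exp (ψ (cat [i] x))) * (Symb.cylinder (i :: w)).indicator f (cat [i] x)
          = (Symb.cylinder w).indicator (fun x => ENNReal.ofReal (Real.exp (ψ (cat [i] x))) * f (cat [i] x)) x := by
        intro x
        by_cases hx : x ∈ Symb.cylinder w
        · rw [indicator_of_mem hx, indicator_of_mem ((mem_cyl_cat _ _ _ _).2 ⟨rfl, hx⟩)]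
        · rw [indicator_of_notMem hx, indicator_of_notMem, mul_zero]
          rw [mem_cyl_cat]; tauto
      simp_rw [e]
      rw [ih]
      · refine lintegral_congr fun x => ?_
        rw [Gw, ENNReal.ofReal_mul (Real.exp_pos _).le, ← cat_cons]
        ring
      · have hc : Continuous fun x => Real.exp (ψ (cat [i] x)) :=
          Real.continuous_exp.comp (hψc.comp (continuous_cat _))
        exact hc.measurable.ennreal_ofReal.mul (hf.comp (continuous_cat _).measurable)
    · intro j _ hj
      have e : ∀ x, (Symb.cylinder (i :: w)).indicator f (cat [j] x) = 0 := by
        intro x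
        rw [indicator_of_notMem]
        rw [mem_cyl_cat]; tauto
      simp [e]
    · intro h; exact absurd (Finset.mem_univ i) h

theorem cyl_pos (ψ : SeqSp N → ℝ) (hψc : Continuous ψ)
    (ν : Measure (SeqSp N)) [IsProbabilityMeasure ν] (hν : IsTransferFixed ψ ν)
    (w : Word N) : 0 < ν (Symb.cylinder w) := by
  have h := cyl_formula ψ hψc ν hν w (fun _ => 1) measurable_const
  rw [lintegral_indicator (isOpen_cyl w).measurableSet] at h
  simp only [lintegral_const, Measure.restrict_apply_univ, one_mul, mul_one] at h
  rw [h, lintegral_pos_iff_support ((Gw_cont ψ hψc w).measurable.ennreal_ofReal)]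
  have : Function.support (fun x => ENNReal.ofReal (Gw ψ w x)) = univ := by
    ext x; simp [Gw_pos]
  rw [this]; simp

theorem Gw_distort (ψ : SeqSp N → ℝ) (hψc : Continuous ψ) {η : ℝ} (hη : 0 < η) :
    ∃ A : ℝ, 1 ≤ A ∧ ∀ (w : Word N) (x y : SeqSp N),
      Gw ψ w x ≤ A * Real.exp (η * w.length) * Gw ψ w y := by
  -- bounded
  obtain ⟨B, hB⟩ : ∃ B, ∀ x, |ψ x| ≤ B :=
    ⟨_, fun x => (BoundedContinuousFunction.mkOfCompact ⟨ψ, hψc⟩).norm_coe_le_norm x⟩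
  -- uniform continuity on cylinders
  obtain ⟨k, hk⟩ : ∃ k : ℕ, ∀ w : Word N, k ≤ w.length → ∀ x y, ψ (cat w x) ≤ η + ψ (cat w y) := by
    have hloc : ∀ x : SeqSp N, ∃ m, ∀ y ∈ Symb.cylinder (pre x m), |ψ y - ψ x| < η / 2 := by
      intro x
      have hU : IsOpen {y | |ψ y - ψ x| < η / 2} :=
        isOpen_lt ((hψc.sub continuous_const).abs) continuous_const
      obtain ⟨m, hm⟩ := cyl_basis _ hU x (by simp; positivity)
      exact ⟨m, hm⟩
    choose m hm using hloc
    obtain ⟨t, ht⟩ := isCompact_univ.elim_finite_subcover (fun x : SeqSp N => Symb.cylinder (pre x (m x)))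
      (fun x => isOpen_cyl _) (fun x _ => mem_iUnion.2 ⟨x, (mem_cyl_iff _ _).2 (by rw [pre_length])⟩)
    refine ⟨t.sup m, fun w hw x y => ?_⟩
    obtain ⟨z, hz, hxz⟩ := mem_iUnion₂.1 (ht (mem_univ (cat w x)))
    have hyz : cat w y ∈ Symb.cylinder (pre z (m z)) := by
      intro i
      rw [← hxz i]
      have hi : (i : ℕ) < w.length := by
        have h1 : (i : ℕ) < m z := lt_of_lt_of_eq i.2 (pre_length z (m z))
        exact lt_of_lt_of_le h1 ((Finset.le_sup (f := m) hz).trans hw)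
      simp [cat, hi]
    have h1 := abs_lt.1 (hm z _ hxz)
    have h2 := abs_lt.1 (hm z _ hyz)
    linarith [h1.1, h1.2, h2.1, h2.2]
  have hB0 : 1 ≤ Real.exp (2 * |B|) := Real.one_le_exp (by positivity)
  refine ⟨Real.exp (2 * |B|) ^ (k + 1), one_le_pow₀ hB0, fun w x y => ?_⟩
  exact prod_distort (N := N) (X := SeqSp N) (Gw ψ) (fun w x => Real.exp (ψ (cat w x)))
    (fun x => rfl) (fun w x => (Gw_pos ψ w x).le) (fun w x => (Real.exp_pos _).le)
    (fun i w x => rfl) _ hB0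
    (fun w x y => by
      rw [← Real.exp_add, Real.exp_le_exp]
      have h1 := abs_le.1 (hB (cat w x))
      have h2 := abs_le.1 (hB (cat w y))
      have := le_abs_self B
      linarith [h1.2, h2.1]) η hη.le (k + 1)
    (fun w hw x y => by
      rw [← Real.exp_add, Real.exp_le_exp]
      exact hk w (by omega) x y) w x y

/-- Lower Gibbs bound. -/
theorem gibbs_lower (ψ : SeqSp N → ℝ) (hψc : Continuous ψ)
    (ν : Measure (SeqSp N)) [IsProbabilityMeasure ν] (hν : IsTransferFixed ψ ν)
    (w : Word N) (H : ℝ) (hH : 1 ≤ H) (hd : ∀ x y, Gw ψ w x ≤ H * Gw ψ w y)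
    (S : Set (SeqSp N)) (hS : MeasurableSet S) :
    ENNReal.ofReal H⁻¹ * (ν (Symb.cylinder w) * ν {x | cat w x ∈ S}) ≤ ν (Symb.cylinder w ∩ S) := by
  have hS' : MeasurableSet {x | cat w x ∈ S} := (continuous_cat w).measurable hS
  have h1 := cyl_formula ψ hψc ν hν w (fun _ => 1) measurable_const
  rw [lintegral_indicator (isOpen_cyl w).measurableSet] at h1
  simp only [lintegral_const, Measure.restrict_apply_univ, one_mul, mul_one] at h1
  have h2 := cyl_formula ψ hψc ν hν w (S.indicator fun _ => 1) (measurable_const.indicator hS)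
  rw [lintegral_indicator (isOpen_cyl w).measurableSet, lintegral_indicator hS] at h2
  simp only [lintegral_const, Measure.restrict_apply_univ, one_mul,
    Measure.restrict_apply hS] at h2
  rw [inter_comm, h2]
  have hp : ∀ y, ENNReal.ofReal H⁻¹ * ν (Symb.cylinder w) ≤ ENNReal.ofReal (Gw ψ w y) := by
    intro y
    rw [h1]
    calc _ ≤ ENNReal.ofReal H⁻¹ * ∫⁻ x, ENNReal.ofReal (H * Gw ψ w y) ∂ν := by
          gcongr with x; exact hd x y
      _ = ENNReal.ofReal (Gw ψ w y) := by
        simp only [lintegral_const, measure_univ, mul_one]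
        rw [← ENNReal.ofReal_mul (by positivity), inv_mul_cancel_left₀ (by positivity)]
  calc _ = ∫⁻ x in {x | cat w x ∈ S}, (ENNReal.ofReal H⁻¹ * ν (Symb.cylinder w)) ∂ν := by
        rw [setLIntegral_const]; ring
    _ ≤ ∫⁻ x in {x | cat w x ∈ S}, ENNReal.ofReal (Gw ψ w x) ∂ν :=
        lintegral_mono fun x => hp x
    _ = ∫⁻ x, ENNReal.ofReal (Gw ψ w x) * S.indicator (fun _ => 1) (cat w x) ∂ν := by
        rw [← lintegral_indicator hS']
        refine lintegral_congr fun x => ?_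
        by_cases hx : cat w x ∈ S
        · rw [indicator_of_mem (show x ∈ {x | cat w x ∈ S} from hx), indicator_of_mem hx, mul_one]
        · rw [indicator_of_notMem (show x ∉ {x | cat w x ∈ S} from hx), indicator_of_notMem hx, mul_zero]

theorem coding_mem {Φ : C1IFS N} {π : SeqSp N → ℝ} (hπ : IsCoding Φ π) (x : SeqSp N) :
    π x ∈ Icc (0:ℝ) 1 := by
  obtain ⟨y, hy, h⟩ := hπ x 0
  rw [← h]; exact wordMap_mem Φ _ hy

theorem coding_cons {Φ : C1IFS N} {r c : ℝ} (hb : Bds Φ r c) {π : SeqSp N → ℝ}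
    (hπ : IsCoding Φ π) (i : Fin N) (x : SeqSp N) : π (cat [i] x) = Φ.T i (π x) := by
  have key : ∀ m : ℕ, |π (cat [i] x) - Φ.T i (π x)| ≤ r ^ m := by
    intro m
    obtain ⟨y, hy, h1⟩ := hπ x m
    obtain ⟨z, hz, h2⟩ := hπ (cat [i] x) (m + 1)
    have e : (List.ofFn fun k : Fin (m + 1) => cat [i] x k) = i :: pre x m := by
      have := pre_succ (cat [i] x) m
      rw [cat_cons_zero, shift_cat_cons, cat_nil] at this
      exact this
    rw [e] at h2
    change wordMap Φ (pre x m) y = π x at h1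
    rw [← h1, ← h2, ← wordMap_cons]
    have := wordMap_contr hb (i :: pre x m) hz hy
    refine this.trans ?_
    have h3 := abs_sub_le_one' hz hy
    have := pow_nonneg hb.r0.le (i :: pre x m).length
    calc _ ≤ r ^ (i :: pre x m).length * 1 := by gcongr
      _ ≤ r ^ m := by
        rw [mul_one]
        refine pow_le_pow_of_le_one hb.r0.le hb.r1.le ?_
        rw [List.length_cons, pre_length]; omega
  have h0 := ge_of_tendsto' (tendsto_pow_atTop_nhds_zero_of_lt_one hb.r0.le hb.r1) key
  have := abs_nonpos_iff.1 h0
  linarith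

theorem coding_cat {Φ : C1IFS N} {r c : ℝ} (hb : Bds Φ r c) {π : SeqSp N → ℝ}
    (hπ : IsCoding Φ π) (w : Word N) (x : SeqSp N) : π (cat w x) = wordMap Φ w (π x) := by
  induction w with
  | nil => rw [cat_nil]; rfl
  | cons i w ih => rw [cat_cons, coding_cons hb hπ, ih, wordMap_cons]

end MD

namespace MD
open Symb
variable {N : ℕ}

theorem stop_exists {Φ : C1IFS N} {r c : ℝ} (hb : Bds Φ r c) (s : ℝ) (hs : 0 < s) :
    ∃ W : Finset (Word N), (∀ x : SeqSp N, ∃ w ∈ W, x ∈ Symb.cylinder w) ∧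
      (∀ w ∈ W, ∀ w' ∈ W, ∀ x, x ∈ Symb.cylinder w → x ∈ Symb.cylinder w' → w = w') ∧
      ∀ w ∈ W, ell Φ w ≤ s ∧ (w = [] ∨ ∃ u i, w = u ++ [i] ∧ s ≤ ell Φ u) := by
  obtain ⟨m0, hm0⟩ := exists_pow_lt_of_lt_one hs hb.r1
  have hex : ∀ x : SeqSp N, ∃ m, ell Φ (pre x m) ≤ s := fun x =>
    ⟨m0, (ell_le hb _).trans (by rw [pre_length]; exact hm0.le)⟩
  set t : SeqSp N → ℕ := fun x => Nat.find (hex x) with ht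
  have ht0 : ∀ x, t x ≤ m0 := fun x =>
    Nat.find_min' (hex x) ((ell_le hb _).trans (by rw [pre_length]; exact hm0.le))
  have hfin : (range fun x : SeqSp N => pre x (t x)).Finite := by
    refine (List.finite_length_le (Fin N) m0).subset ?_
    rintro _ ⟨x, rfl⟩
    simp only [mem_ofPred_eq, pre_length]
    exact ht0 x
  have hpre : ∀ (x y : SeqSp N) (m k : ℕ), k ≤ m → pre x m = pre y m → pre x k = pre y k := by
    intro x y m k hk h
    unfold pre at *
    rw [List.ofFn_inj] at *
    funext i
    exact congrFun h ⟨i, by omega⟩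
  have hcyl : ∀ x y : SeqSp N, x ∈ Symb.cylinder (pre y (t y)) → pre x (t x) = pre y (t y) := by
    intro x y h
    rw [mem_cyl_iff, pre_length] at h
    have : t x = t y := by
      rw [ht]
      simp only
      rw [Nat.find_eq_iff]
      constructor
      · change ell Φ (pre x (t y)) ≤ s
        rw [h]; exact Nat.find_spec (hex y)
      · intro k hk
        rw [hpre x y (t y) k hk.le h]
        exact Nat.find_min (hex y) hk
    rw [this, h]
  refine ⟨hfin.toFinset, fun x => ⟨pre x (t x), by simp, (mem_cyl_iff _ _).2 (by rw [pre_length])⟩,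
    ?_, ?_⟩
  · intro w hw w' hw' x hx hx'
    simp only [Finite.mem_toFinset, mem_range] at hw hw'
    obtain ⟨y, rfl⟩ := hw
    obtain ⟨y', rfl⟩ := hw'
    rw [← hcyl x y hx, hcyl x y' hx']
  · intro w hw
    simp only [Finite.mem_toFinset, mem_range] at hw
    obtain ⟨y, rfl⟩ := hw
    refine ⟨Nat.find_spec (hex y), ?_⟩
    rcases Nat.eq_zero_or_pos (t y) with h | h
    · left; rw [h]; simp [pre]
    · right
      obtain ⟨k, hk⟩ := Nat.exists_eq_succ_of_ne_zero h.ne'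
      refine ⟨pre y k, y k, by rw [hk, ← pre_succ_last], ?_⟩
      exact (not_le.1 (Nat.find_min (hex y) (m := k) (by
        change k < t y
        omega))).le

theorem stop_full {Φ : C1IFS N} {r c : ℝ} (hb : Bds Φ r c) (ψ : SeqSp N → ℝ) (hψc : Continuous ψ)
    {η : ℝ} (hη : 0 < η) :
    ∃ A : ℝ, 1 ≤ A ∧ ∀ n : ℕ, ∃ W : Finset (Word N),
      (∀ x : SeqSp N, ∃ w ∈ W, x ∈ Symb.cylinder w) ∧
      (∀ w ∈ W, ∀ w' ∈ W, ∀ x, x ∈ Symb.cylinder w → x ∈ Symb.cylinder w' → w = w') ∧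
      ∀ w ∈ W, ell Φ w ≤ (1 / 2) ^ n ∧
        (∀ x ∈ Icc (0:ℝ) 1, (1 / 2) ^ n ≤ A * Real.exp (η * n) * |wordDeriv Φ w x|) ∧
        (∀ x y, Gw ψ w x ≤ A * Real.exp (η * n) * Gw ψ w y) := by
  set κ := Real.log 2 / (- Real.log r) with hκ
  have hlr : 0 < - Real.log r := by have := Real.log_neg hb.r0 hb.r1; linarith
  have hκ0 : 0 < κ := div_pos (Real.log_pos (by norm_num)) hlr
  set η' := η / (2 * κ) with hη'
  have hη'0 : 0 < η' := by positivity
  obtain ⟨A1, hA1, hA1'⟩ := geom_distort hb hη'0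
  obtain ⟨A2, hA2, hA2'⟩ := Gw_distort ψ hψc hη'0
  set A := max (A1 ^ 2 * Real.exp (2 * η') / c) (A2 * Real.exp (2 * η')) with hA
  have hA1e : 1 ≤ A2 * Real.exp (2 * η') :=
    one_le_mul_of_one_le_of_one_le hA2 (Real.one_le_exp (by positivity))
  have hAA : 1 ≤ A := hA1e.trans (le_max_right _ _)
  refine ⟨A, hAA, fun n => ?_⟩
  have hs : (0:ℝ) < (1 / 2) ^ n := by positivity
  have hs1 : (1 / 2 : ℝ) ^ n ≤ 1 := pow_le_one₀ (by norm_num) (by norm_num)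
  obtain ⟨W, h1, h2, h3⟩ := stop_exists hb _ hs
  have hlen : ∀ w ∈ W, Real.exp (2 * η' * w.length) ≤ Real.exp (2 * η') * Real.exp (η * n) := by
    intro w hw
    rw [← Real.exp_add, Real.exp_le_exp]
    have hl : (w.length : ℝ) ≤ 1 + κ * n := by
      rcases (h3 w hw).2 with rfl | ⟨u, i, rfl, hu⟩
      · simp; positivity
      · have h4 := hu.trans (ell_le hb u)
        have h5 := Real.log_le_log hs h4
        rw [Real.log_pow, Real.log_pow, one_div, Real.log_inv] at h5
        have h6 : (u.length : ℝ) ≤ κ * n := by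
          rw [hκ, div_mul_eq_mul_div, le_div_iff₀ hlr]; linarith
        push_cast [List.length_append, List.length_singleton]; linarith
    have h6 : η' * κ * 2 = η := by rw [hη']; field_simp
    nlinarith
  refine ⟨W, h1, h2, fun w hw => ⟨(h3 w hw).1, fun x hx => ?_, fun x y => ?_⟩⟩
  · rcases (h3 w hw).2 with rfl | ⟨u, i, hui, hu⟩
    · have h5 : 1 ≤ Real.exp (η * n) := Real.one_le_exp (by positivity)
      simp only [wordDeriv, abs_one, mul_one]
      nlinarith
    · have h4 := stop_est hb hη'0.le hA1 hA1' u i _ hu x hx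
      rw [← hui] at h4
      have h5 : (1/2 : ℝ) ^ n ≤ A1 ^ 2 / c * Real.exp (2 * η' * w.length) * |wordDeriv Φ w x| := by
        rw [div_mul_eq_mul_div, div_mul_eq_mul_div, le_div_iff₀ hb.c0]; linarith
      refine h5.trans (mul_le_mul_of_nonneg_right ?_ (abs_nonneg _))
      have hc := hb.c0
      calc _ ≤ A1 ^ 2 / c * (Real.exp (2 * η') * Real.exp (η * n)) := by
            gcongr; exact hlen w hw
        _ = (A1 ^ 2 * Real.exp (2 * η') / c) * Real.exp (η * n) := by ring
        _ ≤ _ := by gcongr; exact le_max_left _ _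
  · refine (hA2' w x y).trans (mul_le_mul_of_nonneg_right ?_ (Gw_pos ψ w y).le)
    calc _ ≤ A2 * Real.exp (2 * η' * w.length) := by
          refine mul_le_mul_of_nonneg_left (Real.exp_le_exp.2 ?_) (by linarith)
          have : (0:ℝ) ≤ w.length := Nat.cast_nonneg _
          nlinarith
      _ ≤ A2 * (Real.exp (2 * η') * Real.exp (η * n)) := by gcongr; exact hlen w hw
      _ = A2 * Real.exp (2 * η') * Real.exp (η * n) := by ring
      _ ≤ _ := by gcongr; exact le_max_right _ _

theorem count_lem (S : Set ℤ) (R : ℝ) (hR : 0 ≤ R) (h : ∀ k ∈ S, ∀ k' ∈ S, |(k:ℝ) - k'| ≤ R)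
    (a : ℝ≥0∞) : ∑' k : ℤ, (if k ∈ S then a else 0) ≤ ENNReal.ofReal (2 * R + 1) * a := by
  rcases S.eq_empty_or_nonempty with rfl | ⟨k0, hk0⟩
  · simp
  · have hsub : ∀ k ∈ S, k ∈ Finset.Icc (k0 - ⌊R⌋) (k0 + ⌊R⌋) := by
      intro k hk
      have h1 := h k hk k0 hk0
      have h2 : |k - k0| ≤ ⌊R⌋ := by rw [Int.le_floor]; push_cast; exact h1
      rw [abs_le] at h2
      rw [Finset.mem_Icc]; omega
    rw [tsum_eq_sum (s := Finset.Icc (k0 - ⌊R⌋) (k0 + ⌊R⌋))]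
    · calc _ ≤ ∑ k ∈ Finset.Icc (k0 - ⌊R⌋) (k0 + ⌊R⌋), a :=
            Finset.sum_le_sum fun k _ => by split_ifs <;> simp
        _ = ((Finset.Icc (k0 - ⌊R⌋) (k0 + ⌊R⌋)).card : ℝ≥0∞) * a := by simp
        _ ≤ _ := by
          gcongr
          rw [← ENNReal.ofReal_natCast]
          apply ENNReal.ofReal_le_ofReal
          rw [Int.card_Icc]
          have h0 : 0 ≤ ⌊R⌋ := Int.floor_nonneg.2 hR
          have h1 : (((k0 + ⌊R⌋ + 1 - (k0 - ⌊R⌋)).toNat : ℕ) : ℝ) = 2 * ⌊R⌋ + 1 := by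
            have : (((k0 + ⌊R⌋ + 1 - (k0 - ⌊R⌋)).toNat : ℕ) : ℤ) = 2 * ⌊R⌋ + 1 := by omega
            exact_mod_cast this
          rw [h1]
          have := Int.floor_le R
          linarith
    · intro k hk
      rw [if_neg]
      exact fun hk' => hk (hsub k hk')

theorem mem_dyadic (n : ℕ) (k : ℤ) (y : ℝ) : y ∈ Lq.dyadic n k ↔ ⌈y * 2 ^ n⌉ = k := by
  unfold Lq.dyadic
  rw [mem_Ioc, Int.ceil_eq_iff, div_lt_iff₀ (by positivity), le_div_iff₀ (by positivity)]

theorem ceil_near {a b R : ℝ} (h : |a - b| ≤ R) : |((⌈a⌉ : ℤ) : ℝ) - (⌈b⌉ : ℤ)| ≤ R + 1 := by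
  rw [abs_le] at *
  have h1 := Int.le_ceil a
  have h2 := Int.ceil_lt_add_one a
  have h3 := Int.le_ceil b
  have h4 := Int.ceil_lt_add_one b
  constructor <;> linarith [h.1, h.2]

theorem ceil_near_one {a b : ℝ} (h : |a - b| ≤ 1) : ⌈a⌉ = ⌈b⌉ - 1 ∨ ⌈a⌉ = ⌈b⌉ ∨ ⌈a⌉ = ⌈b⌉ + 1 := by
  rw [abs_le] at h
  have h1 : ⌈a⌉ ≤ ⌈b⌉ + 1 := by rw [← Int.ceil_add_one]; exact Int.ceil_mono (by linarith [h.2])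
  have h2 : ⌈b⌉ ≤ ⌈a⌉ + 1 := by rw [← Int.ceil_add_one]; exact Int.ceil_mono (by linarith [h.1])
  omega

/-- the level-n sum -/
def tau (π : SeqSp N → ℝ) (ν : Measure (SeqSp N)) (q : ℝ) (n : ℕ) : ℝ≥0∞ :=
  ∑' k : ℤ, g q (ν {x | π x ∈ Lq.dyadic n k})

theorem dyadic_meas (n : ℕ) (k : ℤ) : MeasurableSet (Lq.dyadic n k) := measurableSet_Ioc

/-- local comparison -/
theorem step_inner {Φ : C1IFS N} {r c : ℝ} (hb : Bds Φ r c) {π : SeqSp N → ℝ}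
    (hπ : IsCoding Φ π) (ν : Measure (SeqSp N)) {q : ℝ} (hq : 0 ≤ q) (hq1 : q ≤ 1)
    (n m : ℕ) (H : ℝ) (hH : 1 ≤ H) (w : Word N)
    (hw : ∀ x ∈ Icc (0:ℝ) 1, (1 / 2) ^ n ≤ H * |wordDeriv Φ w x|) :
    tau π ν q m ≤ ENNReal.ofReal (5 * H) *
      ∑' j : ℤ, g q (ν {x | π (cat w x) ∈ Lq.dyadic (n + m) j}) := by
  have h1 : ∀ k : ℤ, g q (ν {x | π x ∈ Lq.dyadic m k}) ≤
      ∑' j : ℤ, (if k ∈ {k | ∃ x, π x ∈ Lq.dyadic m k ∧ π (cat w x) ∈ Lq.dyadic (n + m) j}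
        then g q (ν {x | π (cat w x) ∈ Lq.dyadic (n + m) j}) else 0) := by
    intro k
    have hsub : {x | π x ∈ Lq.dyadic m k} ⊆
        ⋃ j : ℤ, {x | π x ∈ Lq.dyadic m k ∧ π (cat w x) ∈ Lq.dyadic (n + m) j} := by
      intro x hx
      exact mem_iUnion.2 ⟨_, hx, (mem_dyadic _ _ _).2 rfl⟩
    calc _ ≤ g q (∑' j : ℤ, ν {x | π x ∈ Lq.dyadic m k ∧ π (cat w x) ∈ Lq.dyadic (n + m) j}) :=
          g_mono hq ((measure_mono hsub).trans (measure_iUnion_le _))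
      _ ≤ ∑' j : ℤ, g q (ν {x | π x ∈ Lq.dyadic m k ∧ π (cat w x) ∈ Lq.dyadic (n + m) j}) :=
          g_tsum_le hq hq1 _
      _ ≤ _ := by
        refine ENNReal.tsum_le_tsum fun j => ?_
        split_ifs with h
        · exact g_mono hq (measure_mono fun x hx => hx.2)
        · have : {x | π x ∈ Lq.dyadic m k ∧ π (cat w x) ∈ Lq.dyadic (n + m) j} = ∅ := by
            ext x
            simp only [mem_ofPred_eq, mem_empty_iff_false, iff_false]
            exact fun hx => h ⟨x, hx⟩
          rw [this, measure_empty, g_zero]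
  calc tau π ν q m ≤ _ := ENNReal.tsum_le_tsum h1
    _ = _ := ENNReal.tsum_comm
    _ ≤ ∑' j : ℤ, ENNReal.ofReal (5 * H) * g q (ν {x | π (cat w x) ∈ Lq.dyadic (n + m) j}) := by
      refine ENNReal.tsum_le_tsum fun j => ?_
      refine (count_lem _ (H + 1) (by linarith) ?_ _).trans ?_
      · rintro k ⟨x, hx1, hx2⟩ k' ⟨y, hy1, hy2⟩
        rw [mem_dyadic] at hx1 hy1
        rw [← hx1, ← hy1]
        apply ceil_near
        rw [coding_cat hb hπ] at hx2 hy2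
        have hxm := coding_mem hπ x
        have hym := coding_mem hπ y
        obtain ⟨ξ, hξ, e⟩ := wordMap_mvt Φ w hxm hym
        have h3 : |wordMap Φ w (π x) - wordMap Φ w (π y)| * 2 ^ (n + m) ≤ 1 := by
          have := hx2.1; have := hx2.2; have := hy2.1; have := hy2.2
          rw [← le_div_iff₀ (by positivity), abs_le]
          have e2 : ((j:ℝ) - 1) / 2 ^ (n + m) = j / 2 ^ (n + m) - 1 / 2 ^ (n + m) := by ring
          constructor <;> linarith
        rw [e] at h3
        have h4 := hw ξ hξ
        have e3 : |π x * 2 ^ m - π y * 2 ^ m| = |π x - π y| * 2 ^ m := by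
          rw [← sub_mul, abs_mul, abs_of_pos (show (0:ℝ) < 2 ^ m by positivity)]
        rw [e3]
        have e4 : (1 / 2 : ℝ) ^ n * 2 ^ (n + m) = 2 ^ m := by
          rw [pow_add, ← mul_assoc, ← mul_pow]; norm_num
        calc |π x - π y| * 2 ^ m = |π x - π y| * ((1 / 2 : ℝ) ^ n * 2 ^ (n + m)) := by rw [e4]
          _ ≤ |π x - π y| * (H * |wordDeriv Φ w ξ| * 2 ^ (n + m)) := by gcongr
          _ = H * (|wordDeriv Φ w ξ| * |π x - π y| * 2 ^ (n + m)) := by ring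
          _ ≤ H * 1 := by gcongr
          _ = H := mul_one H
      · gcongr; linarith
    _ = _ := ENNReal.tsum_mul_left

theorem wordMap_near {Φ : C1IFS N} {r c : ℝ} (hb : Bds Φ r c) (w : Word N) {x : ℝ}
    (hx : x ∈ Icc (0:ℝ) 1) : |wordMap Φ w x - wordMap Φ w 0| ≤ ell Φ w := by
  have hc : ContinuousOn (wordMap Φ w) (Icc 0 1) := fun z hz =>
    (wordMap_deriv Φ w hz).continuousWithinAt
  have hi : InjOn (wordMap Φ w) (Icc 0 1) := by
    intro a ha b hb' h
    obtain ⟨ξ, h1, h2⟩ := wordMap_mvt Φ w ha hb'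
    rw [h, sub_self, abs_zero, eq_comm, mul_eq_zero] at h2
    rcases h2 with h2 | h2
    · exact absurd h2 (wordDeriv_pos hb w h1).ne'
    · have := abs_eq_zero.1 h2; linarith
  have z0 : (0:ℝ) ∈ Icc (0:ℝ) 1 := by simp
  have z1 : (1:ℝ) ∈ Icc (0:ℝ) 1 := by simp
  unfold ell
  rcases hc.strictMonoOn_of_injOn_Icc' zero_le_one hi with h | h
  · have h1 := h.monotoneOn z0 hx hx.1
    have h2 := h.monotoneOn hx z1 hx.2
    rw [abs_of_nonneg (by linarith), abs_of_nonneg (by linarith)]; linarith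
  · have h1 := h.antitoneOn z0 hx hx.1
    have h2 := h.antitoneOn hx z1 hx.2
    rw [abs_of_nonpos (by linarith), abs_of_nonpos (by linarith)]; linarith

theorem sum_union_le' {ι : Type*} [DecidableEq ι] (s t : Finset ι) (f : ι → ℝ≥0∞) :
    ∑ i ∈ s ∪ t, f i ≤ ∑ i ∈ s, f i + ∑ i ∈ t, f i := by
  rw [← Finset.sum_union_inter]; exact le_self_add

theorem super_mult {Φ : C1IFS N} {r c : ℝ} (hb : Bds Φ r c) {π : SeqSp N → ℝ}
    (hπ : IsCoding Φ π) (hπc : Continuous π) (ψ : SeqSp N → ℝ) (hψc : Continuous ψ)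
    (ν : Measure (SeqSp N)) [IsProbabilityMeasure ν] (hν : IsTransferFixed ψ ν)
    {q : ℝ} (hq : 0 ≤ q) (hq1 : q ≤ 1)
    (n m : ℕ) (H : ℝ) (hH : 1 ≤ H) (W : Finset (Word N))
    (hW1 : ∀ x : SeqSp N, ∃ w ∈ W, x ∈ Symb.cylinder w)
    (hW2 : ∀ w ∈ W, ∀ w' ∈ W, ∀ x, x ∈ Symb.cylinder w → x ∈ Symb.cylinder w' → w = w')
    (hW3 : ∀ w ∈ W, ell Φ w ≤ (1 / 2) ^ n)
    (hW4 : ∀ w ∈ W, ∀ x ∈ Icc (0:ℝ) 1, (1 / 2) ^ n ≤ H * |wordDeriv Φ w x|)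
    (hW5 : ∀ w ∈ W, ∀ x y, Gw ψ w x ≤ H * Gw ψ w y) :
    tau π ν q n * tau π ν q m ≤ ENNReal.ofReal (135 * H ^ 2) * tau π ν q (n + m) := by
  set D : Word N → ℤ := fun w => ⌈wordMap Φ w 0 * 2 ^ n⌉ with hD
  set Q : ℤ → ℝ≥0∞ := fun k => ∑ w ∈ W.filter (fun w => D w = k), ν (Symb.cylinder w) with hQ
  -- geometric closeness
  have hnear : ∀ w ∈ W, ∀ x, |π (cat w x) * 2 ^ n - wordMap Φ w 0 * 2 ^ n| ≤ 1 := by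
    intro w hw x
    rw [coding_cat hb hπ, ← sub_mul, abs_mul, abs_of_pos (show (0:ℝ) < 2 ^ n by positivity)]
    have h1 := wordMap_near hb w (coding_mem hπ x)
    calc _ ≤ (1 / 2 : ℝ) ^ n * 2 ^ n := by gcongr; exact h1.trans (hW3 w hw)
      _ = 1 := by rw [← mul_pow]; norm_num
  -- step 1
  have step1 : tau π ν q n ≤ 3 * ∑' k, g q (Q k) := by
    have h1 : ∀ k, ν {x | π x ∈ Lq.dyadic n k} ≤ Q (k - 1) + Q k + Q (k + 1) := by
      intro k
      have hsub : {x | π x ∈ Lq.dyadic n k} ⊆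
          ⋃ w ∈ ((W.filter (fun w => D w = k - 1) ∪ W.filter (fun w => D w = k)) ∪
            W.filter (fun w => D w = k + 1)), Symb.cylinder w := by
        intro x hx
        obtain ⟨w, hw, hxw⟩ := hW1 x
        refine mem_iUnion₂.2 ⟨w, ?_, hxw⟩
        obtain ⟨y, rfl⟩ := eq_cat_of_mem w x hxw
        have h2 := ceil_near_one (hnear w hw y)
        change π (cat w y) ∈ Lq.dyadic n k at hx
        rw [mem_dyadic] at hx
        rw [hx] at h2
        simp only [Finset.mem_union, Finset.mem_filter, hw, true_and]
        change k = D w - 1 ∨ k = D w ∨ k = D w + 1 at h2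
        omega
      refine (measure_mono hsub).trans ((measure_biUnion_finset_le _ _).trans ?_)
      refine (sum_union_le' _ _ _).trans ?_
      gcongr
      exact sum_union_le' _ _ _
    calc tau π ν q n ≤ ∑' k, (g q (Q (k - 1)) + g q (Q k) + g q (Q (k + 1))) := by
          refine ENNReal.tsum_le_tsum fun k => (g_mono hq (h1 k)).trans ?_
          refine (g_add_le hq hq1 _ _).trans ?_
          gcongr
          exact g_add_le hq hq1 _ _
      _ = (∑' k, g q (Q (k - 1))) + (∑' k, g q (Q k)) + ∑' k, g q (Q (k + 1)) := by
          rw [ENNReal.tsum_add, ENNReal.tsum_add]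
      _ = _ := by
          rw [show (∑' k, g q (Q (k - 1))) = ∑' k, g q (Q k) from
              (Equiv.subRight (1:ℤ)).tsum_eq (fun k => g q (Q k)),
            show (∑' k, g q (Q (k + 1))) = ∑' k, g q (Q k) from
              (Equiv.addRight (1:ℤ)).tsum_eq (fun k => g q (Q k))]
          ring
  set C : ℤ → Set (SeqSp N) := fun j => {x | π x ∈ Lq.dyadic (n + m) j} with hC
  have hCm : ∀ j, MeasurableSet (C j) := fun j => hπc.measurable (dyadic_meas _ _)
  set σ : Word N → ℤ → ℝ≥0∞ := fun w j => ν {x | π (cat w x) ∈ Lq.dyadic (n + m) j} with hσ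
  set nbr : ℤ → Set ℤ := fun j =>
    {k | ∃ y : ℝ, ⌈y * 2 ^ (n + m)⌉ = j ∧ |((⌈y * 2 ^ n⌉ : ℤ) : ℝ) - k| ≤ 1} with hnbr
  have hM : ENNReal.ofReal (5 * H) ≠ ⊤ := ENNReal.ofReal_ne_top
  have hQ1 : ∀ k, Q k ≠ ⊤ := fun k => ENNReal.sum_ne_top.2 fun w _ => measure_ne_top _ _
  have hHi1 : ENNReal.ofReal H⁻¹ ≤ 1 := by
    rw [ENNReal.ofReal_le_one]; exact inv_le_one_of_one_le₀ hH
  -- lower bound for the mass of small intervals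
  have hlow : ∀ j k, ENNReal.ofReal H⁻¹ *
      (∑ w ∈ W.filter (fun w => D w = k), ν (Symb.cylinder w) * σ w j) ≤ ν (C j) := by
    intro j k
    rw [Finset.mul_sum]
    calc _ ≤ ∑ w ∈ W.filter (fun w => D w = k), ν (Symb.cylinder w ∩ C j) := by
          refine Finset.sum_le_sum fun w hw => ?_
          exact gibbs_lower ψ hψc ν hν w H hH (hW5 w (Finset.mem_filter.1 hw).1) (C j) (hCm j)
      _ = ν (⋃ w ∈ W.filter (fun w => D w = k), Symb.cylinder w ∩ C j) := by
          rw [measure_biUnion_finset]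
          · intro w hw w' hw' hne
            refine Set.disjoint_left.2 fun x hx hx' => hne ?_
            exact hW2 w (Finset.mem_filter.1 hw).1 w' (Finset.mem_filter.1 hw').1 x hx.1 hx'.1
          · intro w _
            exact (isOpen_cyl w).measurableSet.inter (hCm j)
      _ ≤ ν (C j) := measure_mono (iUnion₂_subset fun w _ => inter_subset_right)
  have hlow2 : ∀ j k, ENNReal.ofReal H⁻¹ *
      g q (∑ w ∈ W.filter (fun w => D w = k), ν (Symb.cylinder w) * σ w j) ≤
      if k ∈ nbr j then g q (ν (C j)) else 0 := by
    intro j k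
    split_ifs with hk
    · calc _ ≤ g q (ENNReal.ofReal H⁻¹) *
            g q (∑ w ∈ W.filter (fun w => D w = k), ν (Symb.cylinder w) * σ w j) := by
            gcongr; exact le_g hq1 hHi1
        _ ≤ _ := by rw [← g_mul hq]; exact g_mono hq (hlow j k)
    · rw [Finset.sum_eq_zero, g_zero, mul_zero]
      intro w hw
      obtain ⟨hw1, hw2⟩ := Finset.mem_filter.1 hw
      have : {x | π (cat w x) ∈ Lq.dyadic (n + m) j} = ∅ := by
        ext x
        simp only [mem_ofPred_eq, mem_empty_iff_false, iff_false]
        intro hx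
        apply hk
        refine ⟨π (cat w x), (mem_dyadic _ _ _).1 hx, ?_⟩
        have h2 := ceil_near_one (hnear w hw1 x)
        change ⌈π (cat w x) * 2 ^ n⌉ = D w - 1 ∨ ⌈π (cat w x) * 2 ^ n⌉ = D w ∨
          ⌈π (cat w x) * 2 ^ n⌉ = D w + 1 at h2
        rw [hw2] at h2
        rcases h2 with h2 | h2 | h2 <;> rw [h2] <;> simp
      rw [hσ]
      simp only
      rw [this, measure_empty, mul_zero]
  -- step 3
  have step3 : ∀ k, ENNReal.ofReal H⁻¹ * (g q (Q k) * tau π ν q m) ≤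
      ENNReal.ofReal (5 * H) * ∑' j, (if k ∈ nbr j then g q (ν (C j)) else 0) := by
    intro k
    by_cases hk0 : Q k = 0
    · rw [hk0, g_zero, zero_mul, mul_zero]; exact zero_le
    have hone : ∑ w ∈ W.filter (fun w => D w = k), ν (Symb.cylinder w) / Q k = 1 := by
      simp only [div_eq_mul_inv]
      rw [← Finset.sum_mul]
      exact ENNReal.mul_inv_cancel hk0 (hQ1 k)
    calc ENNReal.ofReal H⁻¹ * (g q (Q k) * tau π ν q m)
        = ENNReal.ofReal H⁻¹ * (g q (Q k) *
          ∑ w ∈ W.filter (fun w => D w = k), ν (Symb.cylinder w) / Q k * tau π ν q m) := by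
          rw [← Finset.sum_mul, hone, one_mul]
      _ ≤ ENNReal.ofReal H⁻¹ * (g q (Q k) * ∑ w ∈ W.filter (fun w => D w = k),
          ν (Symb.cylinder w) / Q k * (ENNReal.ofReal (5 * H) * ∑' j, g q (σ w j))) := by
          gcongr with w hw
          exact step_inner hb hπ ν hq hq1 n m H hH w (hW4 w (Finset.mem_filter.1 hw).1)
      _ = ENNReal.ofReal (5 * H) * ∑' j, ENNReal.ofReal H⁻¹ * (g q (Q k) *
          ∑ w ∈ W.filter (fun w => D w = k), ν (Symb.cylinder w) / Q k * g q (σ w j)) := by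
          rw [ENNReal.tsum_mul_left, ENNReal.tsum_mul_left, Summable.tsum_finsetSum
            (fun _ _ => ENNReal.summable)]
          simp only [ENNReal.tsum_mul_left]
          rw [← mul_assoc, ← mul_assoc, ← mul_assoc, Finset.mul_sum, Finset.mul_sum]
          refine Finset.sum_congr rfl fun w _ => ?_
          ring
      _ ≤ _ := by
          gcongr with j
          refine le_trans ?_ (hlow2 j k)
          gcongr
          exact g_jensen' hq hq1 _ _ _ _ rfl hk0 (hQ1 k)
  have step4 : ENNReal.ofReal H⁻¹ * ((∑' k, g q (Q k)) * tau π ν q m) ≤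
      ENNReal.ofReal (5 * H) * (9 * tau π ν q (n + m)) := by
    calc _ = ∑' k, ENNReal.ofReal H⁻¹ * (g q (Q k) * tau π ν q m) := by
          rw [ENNReal.tsum_mul_left, ENNReal.tsum_mul_right]
      _ ≤ ∑' k, ENNReal.ofReal (5 * H) * ∑' j, (if k ∈ nbr j then g q (ν (C j)) else 0) :=
          ENNReal.tsum_le_tsum step3
      _ = ENNReal.ofReal (5 * H) * ∑' j, ∑' k, (if k ∈ nbr j then g q (ν (C j)) else 0) := by
          rw [ENNReal.tsum_mul_left, ENNReal.tsum_comm]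
      _ ≤ ENNReal.ofReal (5 * H) * ∑' j, 9 * g q (ν (C j)) := by
          gcongr with j
          refine (count_lem (nbr j) 4 (by norm_num) ?_ (g q (ν (C j)))).trans (le_of_eq ?_)
          · rintro k ⟨y, hy1, hy2⟩ k' ⟨y', hy1', hy2'⟩
            have h1 : |y * 2 ^ n - y' * 2 ^ n| ≤ 1 := by
              have a1 := Int.ceil_eq_iff.1 hy1
              have a2 := Int.ceil_eq_iff.1 hy1'
              have a3 : |(y - y') * 2 ^ (n + m)| ≤ 1 := by
                rw [abs_le, sub_mul]; constructor <;> linarith [a1.1, a1.2, a2.1, a2.2]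
              rw [← sub_mul, abs_mul, abs_of_pos (show (0:ℝ) < 2 ^ n by positivity)]
              rw [abs_mul, abs_of_pos (show (0:ℝ) < 2 ^ (n + m) by positivity)] at a3
              refine le_trans ?_ a3
              gcongr
              · norm_num
              · omega
            have h2 := ceil_near h1
            rw [abs_le] at *
            constructor <;> linarith [h2.1, h2.2, hy2.1, hy2.2, hy2'.1, hy2'.2]
          · norm_num
      _ = _ := by rw [ENNReal.tsum_mul_left]; rfl
  have hHH : ENNReal.ofReal H * ENNReal.ofReal H⁻¹ = 1 := by
    rw [← ENNReal.ofReal_mul (by positivity), mul_inv_cancel₀ (by positivity), ENNReal.ofReal_one]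
  calc tau π ν q n * tau π ν q m ≤ (3 * ∑' k, g q (Q k)) * tau π ν q m := by gcongr
    _ = 3 * ((ENNReal.ofReal H * ENNReal.ofReal H⁻¹) * ((∑' k, g q (Q k)) * tau π ν q m)) := by
        rw [hHH]; ring
    _ = 3 * ENNReal.ofReal H * (ENNReal.ofReal H⁻¹ * ((∑' k, g q (Q k)) * tau π ν q m)) := by ring
    _ ≤ 3 * ENNReal.ofReal H * (ENNReal.ofReal (5 * H) * (9 * tau π ν q (n + m))) := by gcongr
    _ = _ := by
        rw [ENNReal.ofReal_mul (by norm_num), ENNReal.ofReal_mul (by norm_num),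
          ENNReal.ofReal_pow (by positivity)]
        have e1 : ENNReal.ofReal 135 = 135 := by norm_num
        have e2 : ENNReal.ofReal 5 = 5 := by norm_num
        rw [e1, e2]
        ring

end MD

namespace MD
open Symb
variable {N : ℕ}

/-- the number of elements of a set of integers -/
def cnt (S : Set ℤ) : ℝ≥0∞ := ∑' k : ℤ, if k ∈ S then 1 else 0

theorem cnt_finite (S : Set ℤ) (hS : S.Finite) : cnt S = (S.ncard : ℝ≥0∞) := by
  unfold cnt
  rw [tsum_eq_sum (s := hS.toFinset) (by intro k hk; simp at hk; simp [hk])]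
  rw [Finset.sum_congr rfl (g := fun _ => (1:ℝ≥0∞)) (by intro k hk; simp at hk; simp [hk])]
  simp [Set.ncard_eq_toFinset_card S hS]

theorem cnt_cmp (S T : Set ℤ) (R : ℤ → ℤ → Prop) (D : ℝ) (hD : 0 ≤ D)
    (h1 : ∀ s ∈ S, ∃ t ∈ T, R s t)
    (h2 : ∀ t s s', R s t → R s' t → |(s:ℝ) - s'| ≤ D) :
    cnt S ≤ ENNReal.ofReal (2 * D + 1) * cnt T := by
  unfold cnt
  calc ∑' s : ℤ, (if s ∈ S then (1:ℝ≥0∞) else 0)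
      ≤ ∑' s : ℤ, ∑' t : ℤ, (if s ∈ {s | R s t} then (if t ∈ T then (1:ℝ≥0∞) else 0) else 0) := by
        refine ENNReal.tsum_le_tsum fun s => ?_
        split_ifs with hs
        · obtain ⟨t, ht, hR⟩ := h1 s hs
          refine le_trans ?_ (ENNReal.le_tsum t)
          simp [ht, hR]
        · exact zero_le
    _ = ∑' t : ℤ, ∑' s : ℤ, (if s ∈ {s | R s t} then (if t ∈ T then (1:ℝ≥0∞) else 0) else 0) :=
        ENNReal.tsum_comm
    _ ≤ ∑' t : ℤ, ENNReal.ofReal (2 * D + 1) * (if t ∈ T then (1:ℝ≥0∞) else 0) :=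
        ENNReal.tsum_le_tsum fun t => count_lem _ D hD (fun s hs s' hs' => h2 t s s' hs hs') _
    _ = _ := ENNReal.tsum_mul_left

theorem tau_ge {π : SeqSp N → ℝ} (hπc : Continuous π)
    (ν : Measure (SeqSp N)) [IsProbabilityMeasure ν] {q : ℝ} (hq1 : q ≤ 1) (n : ℕ) :
    1 ≤ tau π ν q n := by
  unfold tau
  calc (1:ℝ≥0∞) = ν univ := measure_univ.symm
    _ ≤ ν (⋃ k : ℤ, {x | π x ∈ Lq.dyadic n k}) :=
        measure_mono fun x _ => mem_iUnion.2 ⟨_, (mem_dyadic _ _ _).2 rfl⟩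
    _ ≤ ∑' k : ℤ, ν {x | π x ∈ Lq.dyadic n k} := measure_iUnion_le _
    _ ≤ _ := ENNReal.tsum_le_tsum fun k => le_g hq1 prob_le_one

theorem tau_le {Φ : C1IFS N} {π : SeqSp N → ℝ} (hπ : IsCoding Φ π)
    (ν : Measure (SeqSp N)) [IsProbabilityMeasure ν] {q : ℝ} (hq : 0 ≤ q) (n : ℕ) :
    tau π ν q n ≤ ((2 ^ n + 1 : ℕ) : ℝ≥0∞) := by
  unfold tau
  have hg : ∀ t : ℝ≥0∞, t ≤ 1 → g q t ≤ 1 := by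
    intro t ht
    refine (g_mono hq ht).trans ?_
    simp [g]
  rw [tsum_eq_sum (s := Finset.Icc (0:ℤ) (2 ^ n))]
  · refine (Finset.sum_le_card_nsmul _ _ 1 fun k _ => hg _ prob_le_one).trans ?_
    simp only [Int.card_Icc, sub_zero, nsmul_eq_mul, mul_one]
    have : ((2:ℤ) ^ n + 1).toNat = 2 ^ n + 1 := by
      have : ((2:ℤ) ^ n + 1) = ((2 ^ n + 1 : ℕ) : ℤ) := by push_cast; ring
      rw [this, Int.toNat_natCast]
    rw [this]
  · intro k hk
    have : {x | π x ∈ Lq.dyadic n k} = ∅ := by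
      rw [eq_empty_iff_forall_notMem]
      intro x hx
      change π x ∈ Lq.dyadic n k at hx
      rw [mem_dyadic] at hx
      apply hk
      have h := coding_mem hπ x
      rw [Finset.mem_Icc, ← hx]
      constructor
      · exact Int.ceil_nonneg (mul_nonneg h.1 (by positivity))
      · rw [Int.ceil_le]
        push_cast
        nlinarith [h.2, show (0:ℝ) < 2 ^ n by positivity]
    rw [this, measure_empty, g_zero]

theorem tau_conv {Φ : C1IFS N} {r c : ℝ} (hb : Bds Φ r c) {π : SeqSp N → ℝ}
    (hπ : IsCoding Φ π) (hπc : Continuous π) (ψ : SeqSp N → ℝ) (hψc : Continuous ψ)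
    (ν : Measure (SeqSp N)) [IsProbabilityMeasure ν] (hν : IsTransferFixed ψ ν)
    {q : ℝ} (hq : 0 ≤ q) (hq1 : q ≤ 1) :
    ∃ L, Tendsto (fun n : ℕ => Real.log (tau π ν q n).toReal / n) atTop (𝓝 L) := by
  have hft : ∀ n, tau π ν q n ≠ ⊤ := fun n =>
    ne_top_of_le_ne_top (ENNReal.natCast_ne_top _) (tau_le hπ ν hq n)
  have h1 : ∀ n, 1 ≤ (tau π ν q n).toReal := fun n => by
    have := ENNReal.toReal_mono (hft n) (tau_ge hπc ν hq1 n)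
    simpa using this
  refine fekete _ (Real.log 2) (fun n => Real.log_nonneg (h1 n)) ?_ ?_
  · intro n
    have h2 : (tau π ν q n).toReal ≤ 2 ^ (n + 1) := by
      have h3 := ENNReal.toReal_mono (ENNReal.natCast_ne_top _) (tau_le hπ ν hq n)
      rw [ENNReal.toReal_natCast] at h3
      push_cast at h3
      have : (1:ℝ) ≤ 2 ^ n := one_le_pow₀ (by norm_num)
      rw [pow_succ]; linarith
    have h3 := Real.log_le_log (by linarith [h1 n]) h2
    rw [Real.log_pow] at h3
    push_cast at h3
    linarith
  · intro η hη
    obtain ⟨A, hA, hW⟩ := stop_full hb ψ hψc (η := η / 2) (by positivity)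
    refine ⟨Real.log (135 * A ^ 2), fun n m => ?_⟩
    obtain ⟨W, hW1, hW2, hW3⟩ := hW n
    have hH : 1 ≤ A * Real.exp (η / 2 * n) := by
      have : 1 ≤ Real.exp (η / 2 * n) := Real.one_le_exp (by positivity)
      nlinarith
    have key := super_mult hb hπ hπc ψ hψc ν hν hq hq1 n m _ hH W hW1 hW2
      (fun w hw => (hW3 w hw).1) (fun w hw => (hW3 w hw).2.1) (fun w hw => (hW3 w hw).2.2)
    have k2 := ENNReal.toReal_mono (ENNReal.mul_ne_top ENNReal.ofReal_ne_top (hft _)) key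
    rw [ENNReal.toReal_mul, ENNReal.toReal_mul, ENNReal.toReal_ofReal (by positivity)] at k2
    have p1 := h1 n
    have p2 := h1 m
    have p3 := h1 (n + m)
    have k3 := Real.log_le_log (by positivity) k2
    have e : (135:ℝ) * (A * Real.exp (η / 2 * n)) ^ 2 = 135 * A ^ 2 * Real.exp (η * n) := by
      rw [mul_pow, ← Real.exp_nat_mul]
      push_cast
      rw [show 2 * (η / 2 * (n:ℝ)) = η * n by ring]; ring
    rw [e, Real.log_mul (by positivity) (by positivity), Real.log_mul (by positivity) (by positivity),
      Real.log_mul (by positivity) (by positivity), Real.log_exp] at k3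
    linarith

theorem lqSum_eq {π : SeqSp N → ℝ} (hπc : Continuous π)
    (ν : Measure (SeqSp N)) [IsProbabilityMeasure ν] {q : ℝ} (hq : 0 ≤ q) (n : ℕ) :
    Lq.lqSum (Measure.map π ν) n q = (tau π ν q n).toReal := by
  unfold Lq.lqSum tau
  rw [ENNReal.tsum_toReal_eq]
  · congr 1
    funext k
    rw [Measure.map_apply hπc.measurable (dyadic_meas n k)]
    change (if ν {x | π x ∈ Lq.dyadic n k} = 0 then (0:ℝ) else
      (ν {x | π x ∈ Lq.dyadic n k}).toReal ^ q) = _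
    unfold g
    split_ifs with h
    · simp
    · rw [ENNReal.toReal_rpow]
  · intro k
    unfold g
    split_ifs with h
    · simp
    · exact ENNReal.rpow_ne_top_of_nonneg hq (measure_ne_top _ _)

theorem mesh_finite {Φ : C1IFS N} {π : SeqSp N → ℝ} (hπ : IsCoding Φ π) {δ : ℝ} (hδ : 0 < δ) :
    {k : ℤ | (Set.Ioc ((k : ℝ) * δ) (((k : ℝ) + 1) * δ) ∩ (π '' univ)).Nonempty}.Finite := by
  refine (Set.finite_Icc (-1 : ℤ) ⌈1 / δ⌉).subset ?_
  rintro k ⟨_, ⟨h1, h2⟩, x, -, rfl⟩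
  have h := coding_mem hπ x
  constructor
  · have : (0:ℝ) ≤ (k:ℝ) + 1 := by
      by_contra hc
      push Not at hc
      nlinarith [h.1]
    have : (0:ℤ) ≤ k + 1 := by exact_mod_cast this
    omega
  · have : (k:ℝ) ≤ 1 / δ := by rw [le_div_iff₀ hδ]; linarith [h.2]
    exact_mod_cast this.trans (Int.le_ceil _)

theorem mesh_cmp {Φ : C1IFS N} {π : SeqSp N → ℝ}
    (hπ : IsCoding Φ π) (hπc : Continuous π) (ψ : SeqSp N → ℝ) (hψc : Continuous ψ)
    (ν : Measure (SeqSp N)) [IsProbabilityMeasure ν] (hν : IsTransferFixed ψ ν)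
    {δ : ℝ} (hδ : 0 < δ) (n : ℕ) (hn1 : δ * 2 ^ n ≤ 1) (hn2 : 1 ≤ δ * 2 ^ n * 2) :
    |Real.log (meshCount (π '' univ) δ) - Real.log (tau π ν 0 n).toReal| ≤ Real.log 15 := by
  set M := {k : ℤ | (Set.Ioc ((k : ℝ) * δ) (((k : ℝ) + 1) * δ) ∩ (π '' univ)).Nonempty} with hM
  have hMf : M.Finite := mesh_finite hπ hδ
  set S := {k : ℤ | ν {x | π x ∈ Lq.dyadic n k} ≠ 0} with hS
  have hτ : tau π ν 0 n = cnt S := by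
    unfold tau cnt
    congr 1
    funext k
    rw [g_zero_q, hS]
    by_cases h : ν {x | π x ∈ Lq.dyadic n k} = 0
    · simp [h]
    · rw [if_neg h, if_pos (show k ∈ {k : ℤ | ν {x | π x ∈ Lq.dyadic n k} ≠ 0} from h)]
  have hp : (0:ℝ) < 2 ^ n := by positivity
  have a1 : cnt S ≤ ENNReal.ofReal (2 * 7 + 1) * cnt M := by
    refine cnt_cmp S M (fun k j => ∃ y, ⌈y * 2 ^ n⌉ = k ∧ y ∈ Set.Ioc ((j : ℝ) * δ) (((j : ℝ) + 1) * δ))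
      7 (by norm_num) ?_ ?_
    · intro k hk
      obtain ⟨x, hx⟩ := nonempty_of_measure_ne_zero hk
      change π x ∈ Lq.dyadic n k at hx
      rw [mem_dyadic] at hx
      have hy : π x ∈ Set.Ioc (((⌈π x / δ⌉ - 1 : ℤ) : ℝ) * δ) ((((⌈π x / δ⌉ - 1 : ℤ) : ℝ) + 1) * δ) := by
        have h1 := Int.le_ceil (π x / δ)
        have h2 := Int.ceil_lt_add_one (π x / δ)
        rw [div_le_iff₀ hδ] at h1
        have h3 : (⌈π x / δ⌉ - 1 : ℝ) < π x / δ := by linarith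
        rw [lt_div_iff₀ hδ] at h3
        push_cast
        exact ⟨h3, by linarith⟩
      exact ⟨⌈π x / δ⌉ - 1, ⟨π x, hy, x, mem_univ _, rfl⟩, π x, hx, hy⟩
    · rintro j k k' ⟨y, rfl, hy⟩ ⟨y', rfl, hy'⟩
      have h1 : |y * 2 ^ n - y' * 2 ^ n| ≤ 1 := by
        rw [← sub_mul, abs_mul, abs_of_pos hp]
        have : |y - y'| ≤ δ := by
          rw [abs_le]; constructor <;> linarith [hy.1, hy.2, hy'.1, hy'.2]
        exact (mul_le_mul_of_nonneg_right this hp.le).trans hn1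
      linarith [ceil_near h1]
  have a2 : cnt M ≤ ENNReal.ofReal (2 * 7 + 1) * cnt S := by
    refine cnt_cmp M S (fun j k => ∃ y, y ∈ Set.Ioc ((j : ℝ) * δ) (((j : ℝ) + 1) * δ) ∧
      |((⌈y * 2 ^ n⌉ : ℤ) : ℝ) - k| ≤ 1) 7 (by norm_num) ?_ ?_
    · rintro j ⟨_, hy, x, -, rfl⟩
      set U : Set (SeqSp N) := {z | |π z * 2 ^ n - π x * 2 ^ n| < 1} with hU
      have hUo : IsOpen U := isOpen_lt (by fun_prop) continuous_const
      obtain ⟨m, hm⟩ := cyl_basis U hUo x (by simp [hU])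
      have hpos : 0 < ν U := (cyl_pos ψ hψc ν hν _).trans_le (measure_mono hm)
      set k0 := ⌈π x * 2 ^ n⌉ with hk0
      by_contra hcon
      push Not at hcon
      have hz : ∀ k : ℤ, |((k0 : ℤ) : ℝ) - k| ≤ 1 → ν {z | π z ∈ Lq.dyadic n k} = 0 := by
        intro k hk
        by_contra h
        have := hcon k h (π x) hy
        exact absurd hk (not_le.2 this)
      have hsub : U ⊆ ({z | π z ∈ Lq.dyadic n (k0 - 1)} ∪ {z | π z ∈ Lq.dyadic n k0}) ∪
          {z | π z ∈ Lq.dyadic n (k0 + 1)} := by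
        intro z hz
        have h2 := ceil_near_one (le_of_lt (show |π z * 2 ^ n - π x * 2 ^ n| < 1 from hz))
        simp only [mem_union, mem_ofPred_eq, mem_dyadic]
        tauto
      have : ν U = 0 := measure_mono_null hsub (measure_union_null (measure_union_null
        (hz _ (by simp)) (hz _ (by simp))) (hz _ (by simp)))
      exact hpos.ne' this
    · rintro k j j' ⟨y, hy, h1⟩ ⟨y', hy', h2⟩
      have c1 := Int.le_ceil (y * 2 ^ n)
      have c2 := Int.ceil_lt_add_one (y * 2 ^ n)
      have c3 := Int.le_ceil (y' * 2 ^ n)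
      have c4 := Int.ceil_lt_add_one (y' * 2 ^ n)
      rw [abs_le] at h1 h2 ⊢
      have e1 : (j:ℝ) * (δ * 2 ^ n) < y * 2 ^ n := by
        have := mul_lt_mul_of_pos_right hy.1 hp; linarith
      have e2 : y * 2 ^ n ≤ ((j:ℝ) + 1) * (δ * 2 ^ n) := by
        have := mul_le_mul_of_nonneg_right hy.2 hp.le; linarith
      have e3 : (j':ℝ) * (δ * 2 ^ n) < y' * 2 ^ n := by
        have := mul_lt_mul_of_pos_right hy'.1 hp; linarith
      have e4 : y' * 2 ^ n ≤ ((j':ℝ) + 1) * (δ * 2 ^ n) := by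
        have := mul_le_mul_of_nonneg_right hy'.2 hp.le; linarith
      set D := δ * 2 ^ n with hD
      have hD0 : 0 < D := by positivity
      constructor
      · by_contra hc
        push Not at hc
        nlinarith [h1.1, h1.2, h2.1, h2.2]
      · by_contra hc
        push Not at hc
        nlinarith [h1.1, h1.2, h2.1, h2.2]
  have hMc : cnt M = (meshCount (π '' univ) δ : ℝ≥0∞) := cnt_finite M hMf
  have hft : tau π ν 0 n ≠ ⊤ :=
    ne_top_of_le_ne_top (ENNReal.natCast_ne_top _) (tau_le hπ ν le_rfl n)
  rw [← hτ, hMc] at a1 a2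
  have b1 := ENNReal.toReal_mono (ENNReal.mul_ne_top ENNReal.ofReal_ne_top (ENNReal.natCast_ne_top _)) a1
  have b2 := ENNReal.toReal_mono (ENNReal.mul_ne_top ENNReal.ofReal_ne_top hft) a2
  rw [ENNReal.toReal_mul, ENNReal.toReal_ofReal (by norm_num), ENNReal.toReal_natCast] at b1 b2
  have b3 : 1 ≤ (tau π ν 0 n).toReal := by
    have := ENNReal.toReal_mono hft (tau_ge hπc ν zero_le_one n)
    simpa using this
  set m : ℝ := (meshCount (π '' univ) δ : ℝ)
  have hm : 0 < m := by linarith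
  have l1 := Real.log_le_log (by linarith) b1
  have l2 := Real.log_le_log hm b2
  rw [Real.log_mul (by norm_num) (by positivity)] at l1 l2
  norm_num at l1 l2
  rw [abs_le]
  constructor <;> linarith

theorem box_conv {Φ : C1IFS N} {r c : ℝ} (hb : Bds Φ r c) {π : SeqSp N → ℝ}
    (hπ : IsCoding Φ π) (hπc : Continuous π) (ψ : SeqSp N → ℝ) (hψc : Continuous ψ)
    (ν : Measure (SeqSp N)) [IsProbabilityMeasure ν] (hν : IsTransferFixed ψ ν) :
    ∃ d : ℝ, Filter.Tendsto
      (fun δ : ℝ => Real.log (meshCount (π '' univ) δ) / (-Real.log δ))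
      (nhdsWithin 0 (Set.Ioi 0)) (nhds d) := by
  obtain ⟨L, hL⟩ := tau_conv hb hπ hπc ψ hψc ν hν le_rfl zero_le_one
  have hl2 : 0 < Real.log 2 := Real.log_pos (by norm_num)
  set s : ℝ → ℝ := fun δ => -Real.log δ / Real.log 2 with hs
  have hst : Tendsto s (𝓝[>] 0) atTop :=
    (tendsto_neg_atBot_atTop.comp Real.tendsto_log_nhdsGT_zero).atTop_div_const hl2
  have t1 := hL.comp (tendsto_nat_floor_atTop.comp hst)
  have t2 := (tendsto_nat_floor_div_atTop (R := ℝ)).comp hst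
  have hbd : ∀ᶠ δ in 𝓝[>] (0:ℝ), 1 ≤ s δ ∧ 0 < δ ∧
      |Real.log (meshCount (π '' univ) δ) - Real.log (tau π ν 0 ⌊s δ⌋₊).toReal| ≤ Real.log 15 := by
    filter_upwards [hst.eventually_ge_atTop 1, self_mem_nhdsWithin] with δ h1 h0
    have h0 : 0 < δ := h0
    refine ⟨h1, h0, mesh_cmp hπ hπc ψ hψc ν hν h0 _ ?_ ?_⟩
    · have f1 := Nat.floor_le (show 0 ≤ s δ by linarith)
      rw [hs] at f1
      simp only at f1
      rw [le_div_iff₀ hl2] at f1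
      rw [← Real.log_nonpos_iff (by positivity), Real.log_mul (by positivity) (by positivity),
        Real.log_pow]
      linarith
    · have f1 := (Nat.lt_floor_add_one (s δ)).le
      have f2 : -Real.log δ ≤ ((⌊s δ⌋₊ : ℝ) + 1) * Real.log 2 := by
        rw [← div_le_iff₀ hl2]; exact f1
      rw [← Real.log_nonneg_iff (by positivity), Real.log_mul (by positivity) (by positivity),
        Real.log_mul (by positivity) (by positivity), Real.log_pow]
      linarith
  have t3 : Tendsto (fun δ => (Real.log (meshCount (π '' univ) δ) -
      Real.log (tau π ν 0 ⌊s δ⌋₊).toReal) / s δ) (𝓝[>] 0) (𝓝 0) := by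
    have hz : Tendsto (fun δ => Real.log 15 / s δ) (𝓝[>] 0) (𝓝 0) := hst.const_div_atTop _
    refine squeeze_zero_norm' ?_ hz
    filter_upwards [hbd] with δ h
    rw [Real.norm_eq_abs, abs_div, abs_of_pos (show 0 < s δ by linarith [h.1])]
    gcongr
    · linarith [h.1]
    · exact h.2.2
  refine ⟨(L * 1 + 0) / Real.log 2, (((t1.mul t2).add t3).div_const (Real.log 2)).congr' ?_⟩
  filter_upwards [hbd] with δ h
  have hs0 : 0 < s δ := by linarith [h.1]
  have hf : (⌊s δ⌋₊ : ℝ) ≠ 0 := by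
    have : 1 ≤ ⌊s δ⌋₊ := Nat.le_floor (by simpa using h.1)
    positivity
  have e : -Real.log δ = s δ * Real.log 2 := by
    rw [hs]; simp only; field_simp
  rw [e]
  simp only [Function.comp]
  field_simp
  ring

end MD

/-- **Proposition 5.12.**  For a weak Gibbs measure `ρ` with respect to a non-trivial
`C¹`-IFS, the upper and lower Minkowski dimensions of `supp(ρ)` (the self-conformal set
`K = π(I^ℕ)`) coincide, i.e. the Minkowski dimension exists; in particular the
`L^q`-spectrum `β_ρ` exists as a limit on the whole interval `[0,1]`. -/
theorem Minkowski_dimension_exists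
    {N : ℕ} (Φ : C1IFS N) (hΦ : Φ.NontrivialIFS)
    (π : SeqSp N → ℝ) (hπ : IsCoding Φ π) (hπc : Continuous π)
    (ψ : SeqSp N → ℝ) (hψc : Continuous ψ) (hψn : Normalized ψ)
    (ν : Measure (SeqSp N)) [IsProbabilityMeasure ν] (hν : IsTransferFixed ψ ν)
    (ρ : Measure ℝ) (hρ : ρ = Measure.map π ν)
    (K : Set ℝ) (hK : K = π '' Set.univ) :
    (∃ d : ℝ, Filter.Tendsto
      (fun δ : ℝ => Real.log (meshCount K δ) / (-Real.log δ))
      (nhdsWithin 0 (Set.Ioi 0)) (nhds d)) ∧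
    (∀ q ∈ Set.Icc (0:ℝ) 1,
      ∃ L : ℝ, Filter.Tendsto (fun n => Lq.betaN ρ n q) Filter.atTop (nhds L)) := by
  subst hρ hK
  obtain ⟨r, c, hb⟩ := MD.exists_bds Φ hΦ.1
  refine ⟨MD.box_conv hb hπ hπc ψ hψc ν hν, fun q hq => ?_⟩
  obtain ⟨L, hL⟩ := MD.tau_conv hb hπ hπc ψ hψc ν hν hq.1 hq.2
  refine ⟨L / Real.log 2, (hL.div_const (Real.log 2)).congr fun n => ?_⟩
  rw [Lq.betaN, MD.lqSum_eq hπc ν hq.1 n, div_div]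
end
end
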